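/- Assume p^2·e_0 − (p+1)·b_2 + (p−1)·b_1 > 0, and let 𝔄_{K_2/K_0} = { α ∈ K_0[G] : α·𝔒_2 ⊆ 𝔒_2 } be the associated order of 𝔒_2. Then 𝔒_2 is free over 𝔄_{K_2/K_0} if and only if w_j = d_j − d_0 for all 0 ≤ j ≤ p^2 − 1; moreover, in that case 𝔒_2 = 𝔄_{K_2/K_0}·ρ_0. -/

import Mathlib

/-- A normalized discrete valuation on a field `K`, recorded as a function
`v : K → ℤ`.  The value of `v` at `0` is irrelevant: all conditions below only
refer to nonzero elements (the convention `v 0 = ∞` being understood). -/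
structure IsDiscVal {K : Type*} [Field K] (v : K → ℤ) : Prop where
  map_one : v 1 = 0
  map_mul : ∀ x y : K, x ≠ 0 → y ≠ 0 → v (x * y) = v x + v y
  min_le_add : ∀ x y : K, x ≠ 0 → y ≠ 0 → x + y ≠ 0 → min (v x) (v y) ≤ v (x + y)
  exists_uniformizer : ∃ π : K, π ≠ 0 ∧ v π = 1

/-!
The operators `Ψ^(a)`, `a < p²`, send an element `ρ` of valuation `b₂` to elements of valuation
`𝔟(a)`. These valuations are pairwise incongruent modulo `p²`, so the `Ψ^(a) ρ` form a `K₀`-basis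
of `K₂` on which integrality is read off coefficientwise, and the `Ψ^(a)` form a `K₀`-basis of
`K₀[G]`. Both facts come from the basis `choose X i * choose x₁ j` of `K₂`, where
`X = x₂ - μ x₁`: up to small errors `σ ^ p - 1` lowers `i` and `σ (σ ^ p)^[μ] - 1` lowers `j`.

The identities `Ψ₁ ^ p = Ψ₂` and `Ψ₂ ^ p = 0` hold up to an error that the hypothesis on `e₀` makes
negligible, so on `ρ` the `Ψ^(a)` multiply like the powers of a nilpotent operator, and the
associated order is the direct sum of the `π ^ (-w_j) 𝔒₀ Ψ^(j)`. For `ν = ∑ e_a Ψ^(a) ρ`, the map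
`α ↦ α ν` is then given, modulo the maximal ideal, by an upper triangular Toeplitz matrix whose
`j`-th diagonal entry is `e_0` rescaled by valuation `d_j - w_j`. Such a matrix is invertible only
if its diagonal entries are units, that is, if `v(e_0) = w_j - d_j` for every `j`; since `w_0 = 0`,
this forces `w_j = d_j - d_0`.
-/

open Finset

section Valuation

variable {K : Type*} [Field K] {v : K → ℤ}

namespace IsDiscVal

theorem map_neg (hv : IsDiscVal v) {x : K} (hx : x ≠ 0) : v (-x) = v x := by
  have hneg : v (-1) + v (-1) = 0 := by
    rw [← hv.map_mul _ _ (by simp) (by simp), neg_mul_neg, mul_one, hv.map_one]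
  have hmul : v (-x) = v (-1) + v x := by
    rw [← hv.map_mul _ _ (by simp) hx, neg_one_mul]
  omega

/-- The fractional ideal of elements of valuation at least `N`. -/
def ideal (hv : IsDiscVal v) (N : ℤ) : AddSubgroup K where
  carrier := {x | x = 0 ∨ N ≤ v x}
  zero_mem' := Or.inl rfl
  add_mem' := by
    rintro x y hx hy
    by_cases hx0 : x = 0
    · simpa [hx0] using hy
    by_cases hy0 : y = 0
    · simpa [hy0] using hx
    refine or_iff_not_imp_left.2 fun hxy => ?_
    exact (le_min (hx.resolve_left hx0) (hy.resolve_left hy0)).trans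
      (hv.min_le_add x y hx0 hy0 hxy)
  neg_mem' := by
    rintro x hx
    by_cases hx0 : x = 0
    · simp [hx0]
    · exact Or.inr ((hx.resolve_left hx0).trans_eq (hv.map_neg hx0).symm)

variable {M N : ℤ} {x y : K}

theorem ideal_mono (hv : IsDiscVal v) (h : N ≤ M) (hx : x ∈ hv.ideal M) : x ∈ hv.ideal N :=
  hx.imp_right h.trans

theorem mem_ideal_val (hv : IsDiscVal v) (x : K) : x ∈ hv.ideal (v x) :=
  Or.inr le_rfl

theorem mul_mem (hv : IsDiscVal v) (hx : x ∈ hv.ideal M) (hy : y ∈ hv.ideal N) :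
    x * y ∈ hv.ideal (M + N) := by
  by_cases hx0 : x = 0
  · exact Or.inl (by simp [hx0])
  by_cases hy0 : y = 0
  · exact Or.inl (by simp [hy0])
  refine Or.inr ?_
  rw [hv.map_mul x y hx0 hy0]
  exact add_le_add (hx.resolve_left hx0) (hy.resolve_left hy0)

theorem one_mem (hv : IsDiscVal v) : (1 : K) ∈ hv.ideal 0 :=
  Or.inr hv.map_one.ge

theorem natCast_mem (hv : IsDiscVal v) (k : ℕ) : (k : K) ∈ hv.ideal 0 := by
  simpa using nsmul_mem hv.one_mem k

theorem prod_mem (hv : IsDiscVal v) {ι : Type*} {s : Finset ι} {f : ι → K}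
    (hf : ∀ i ∈ s, f i ∈ hv.ideal N) : ∏ i ∈ s, f i ∈ hv.ideal (#s * N) := by
  classical
  induction s using Finset.induction_on with
  | empty => simpa using hv.one_mem
  | insert i s hi ih =>
    rw [prod_insert hi, card_insert_of_notMem hi]
    refine hv.ideal_mono (le_of_eq ?_) (hv.mul_mem (hf i (mem_insert_self i s))
      (ih fun j hj => hf j (mem_insert_of_mem hj)))
    push_cast
    ring

theorem pow_mem (hv : IsDiscVal v) (hx : x ∈ hv.ideal N) (k : ℕ) : x ^ k ∈ hv.ideal (k * N) := by
  simpa using hv.prod_mem (s := range k) (f := fun _ => x) fun _ _ => hx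

end IsDiscVal

/-- `x` is nonzero of valuation exactly `N`. -/
def HasVal (v : K → ℤ) (x : K) (N : ℤ) : Prop :=
  x ≠ 0 ∧ v x = N

theorem eq_zero_or_hasVal (v : K → ℤ) (x : K) : x = 0 ∨ HasVal v x (v x) :=
  (eq_or_ne x 0).imp_right fun h => ⟨h, rfl⟩

theorem IsDiscVal.hasVal_iff (hv : IsDiscVal v) {x : K} {N : ℤ} :
    HasVal v x N ↔ x ∈ hv.ideal N ∧ x ∉ hv.ideal (N + 1) := by
  constructor
  · rintro ⟨hx, rfl⟩
    exact ⟨hv.mem_ideal_val x, fun h => (lt_add_one (v x)).not_ge (h.resolve_left hx)⟩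
  · rintro ⟨hN, hN1⟩
    have hx : x ≠ 0 := fun h => hN1 (Or.inl h)
    have hlt : ¬ N + 1 ≤ v x := fun h => hN1 (Or.inr h)
    have hle := hN.resolve_left hx
    exact ⟨hx, by omega⟩

namespace HasVal

variable {x y : K} {M N : ℤ}

theorem mem (hx : HasVal v x N) (hv : IsDiscVal v) : x ∈ hv.ideal N :=
  (hv.hasVal_iff.1 hx).1

theorem notMem (hx : HasVal v x N) (hv : IsDiscVal v) (h : N < M) : x ∉ hv.ideal M :=
  fun hM => (hv.hasVal_iff.1 hx).2 (hv.ideal_mono h hM)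

theorem le_of_mem (hx : HasVal v x N) (hv : IsDiscVal v) (h : x ∈ hv.ideal M) : M ≤ N :=
  not_lt.1 fun hlt => hx.notMem hv hlt h

theorem congr (hx : HasVal v x N) (h : N = M) : HasVal v x M :=
  h ▸ hx

theorem one (hv : IsDiscVal v) : HasVal v 1 0 :=
  ⟨one_ne_zero, hv.map_one⟩

theorem mul (hx : HasVal v x M) (hy : HasVal v y N) (hv : IsDiscVal v) :
    HasVal v (x * y) (M + N) :=
  ⟨mul_ne_zero hx.1 hy.1, by rw [hv.map_mul _ _ hx.1 hy.1, hx.2, hy.2]⟩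

theorem neg (hx : HasVal v x N) (hv : IsDiscVal v) : HasVal v (-x) N :=
  ⟨neg_ne_zero.2 hx.1, by rw [hv.map_neg hx.1, hx.2]⟩

theorem prod (hv : IsDiscVal v) {ι : Type*} {s : Finset ι} {f : ι → K}
    (hf : ∀ i ∈ s, HasVal v (f i) N) : HasVal v (∏ i ∈ s, f i) (#s * N) := by
  classical
  induction s using Finset.induction_on with
  | empty => simpa using one hv
  | insert i s hi ih =>
    rw [prod_insert hi, card_insert_of_notMem hi]
    refine ((hf i (mem_insert_self i s)).mul (ih fun j hj => hf j (mem_insert_of_mem hj))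
      hv).congr ?_
    push_cast
    ring

theorem pow (hx : HasVal v x N) (hv : IsDiscVal v) (k : ℕ) : HasVal v (x ^ k) (k * N) := by
  simpa using prod hv (s := range k) (f := fun _ => x) fun _ _ => hx

theorem inv (hx : HasVal v x N) (hv : IsDiscVal v) : HasVal v x⁻¹ (-N) := by
  refine ⟨inv_ne_zero hx.1, ?_⟩
  have hmul := hv.map_mul x x⁻¹ hx.1 (inv_ne_zero hx.1)
  rw [mul_inv_cancel₀ hx.1, hv.map_one, hx.2] at hmul
  omega

theorem zpow (hx : HasVal v x N) (hv : IsDiscVal v) (k : ℤ) : HasVal v (x ^ k) (k * N) := by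
  obtain ⟨k, rfl | rfl⟩ := k.eq_nat_or_neg
  · simpa using hx.pow hv k
  · simpa using (hx.pow hv k).inv hv

theorem add_of_mem (hx : HasVal v x N) (hv : IsDiscVal v) (hy : y ∈ hv.ideal M) (h : N < M) :
    HasVal v (x + y) N := by
  have hy' : y ∈ hv.ideal (N + 1) := hv.ideal_mono h hy
  refine hv.hasVal_iff.2 ⟨add_mem (hx.mem hv) (hv.ideal_mono h.le hy), fun hxy => ?_⟩
  exact hx.notMem hv (lt_add_one N) ((add_mem_cancel_right hy').1 hxy)

theorem sub_of_mem (hx : HasVal v x N) (hv : IsDiscVal v) (hy : y ∈ hv.ideal M) (h : N < M) :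
    HasVal v (x - y) N := by
  simpa [sub_eq_add_neg] using hx.add_of_mem hv (neg_mem hy) h

end HasVal

namespace IsDiscVal

theorem exists_hasVal (hv : IsDiscVal v) (N : ℤ) : ∃ x, HasVal v x N := by
  obtain ⟨π, hπ⟩ := hv.exists_uniformizer
  exact ⟨π ^ N, (HasVal.zpow hπ hv N).congr (mul_one N)⟩

/-- Among the summands outside `hv.ideal N`, one of minimal valuation would dominate the sum. -/
theorem mem_of_sum_mem (hv : IsDiscVal v) {ι : Type*} {s : Finset ι} {f : ι → K}
    (hf : ∀ i ∈ s, ∀ j ∈ s, f i ≠ 0 → f j ≠ 0 → v (f i) = v (f j) → i = j) {N : ℤ}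
    (hs : ∑ i ∈ s, f i ∈ hv.ideal N) {i : ι} (hi : i ∈ s) : f i ∈ hv.ideal N := by
  classical
  by_contra hiN
  obtain ⟨k, hk, hmin⟩ := (s.filter fun i => f i ∉ hv.ideal N).exists_min_image (fun i => v (f i))
    ⟨i, mem_filter.2 ⟨hi, hiN⟩⟩
  obtain ⟨hks, hkN⟩ := mem_filter.1 hk
  obtain ⟨hk0, hlt⟩ : f k ≠ 0 ∧ v (f k) < N := ⟨fun h => hkN (Or.inl h),
    not_le.1 fun h => hkN (Or.inr h)⟩
  have hrest : ∑ j ∈ s.erase k, f j ∈ hv.ideal (v (f k) + 1) := by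
    refine sum_mem fun j hj => ?_
    obtain ⟨hjk, hjs⟩ := mem_erase.1 hj
    by_cases hjN : f j ∈ hv.ideal N
    · exact hv.ideal_mono hlt hjN
    · have hle := hmin j (mem_filter.2 ⟨hjs, hjN⟩)
      have hne : v (f k) ≠ v (f j) := fun h =>
        hjk (hf k hks j hjs hk0 (fun h0 => hjN (Or.inl h0)) h).symm
      exact Or.inr (by omega)
  have hval : HasVal v (∑ j ∈ s, f j) (v (f k)) := by
    rw [← add_sum_erase s f hks]
    exact HasVal.add_of_mem ⟨hk0, rfl⟩ hv hrest (lt_add_one _)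
  exact hval.notMem hv hlt hs

section ResidueChar

variable {p : ℕ}

theorem hasVal_natCast (hv : IsDiscVal v) (hp : p.Prime) (hpv : (p : K) ∈ hv.ideal 1)
    {k : ℕ} (hk0 : k ≠ 0) (hk : k < p) : HasVal v (k : K) 0 := by
  refine hv.hasVal_iff.2 ⟨hv.natCast_mem k, fun hk1 => ?_⟩
  obtain ⟨a, b, hab⟩ : IsCoprime (k : ℤ) p :=
    Nat.isCoprime_iff_coprime.2 (Nat.coprime_of_lt_prime hk0 hk hp).symm
  have hone : (a : K) * k + b * p = 1 := by exact_mod_cast congrArg (Int.cast : ℤ → K) hab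
  have hmem := add_mem (zsmul_mem hk1 a) (zsmul_mem hpv b)
  rw [zsmul_eq_mul, zsmul_eq_mul, hone] at hmem
  exact (HasVal.one hv).notMem hv one_pos hmem

theorem hasVal_factorial (hv : IsDiscVal v) (hp : p.Prime) (hpv : (p : K) ∈ hv.ideal 1)
    {k : ℕ} (hk : k < p) : HasVal v (k.factorial : K) 0 := by
  induction k with
  | zero => simpa using HasVal.one hv
  | succ k ih =>
    rw [Nat.factorial_succ, Nat.cast_mul]
    simpa using (hv.hasVal_natCast hp hpv k.succ_ne_zero hk).mul (ih (by omega)) hv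

theorem exists_add_pow_prime_eq (hv : IsDiscVal v) (hp : p.Prime) {x y : K} {a b N : ℤ}
    (hx : x ∈ hv.ideal a) (hy : y ∈ hv.ideal b) (ha : N ≤ (p - 1) * a + b)
    (hb : N ≤ a + (p - 1) * b) :
    ∃ r ∈ hv.ideal N, (x + y) ^ p = x ^ p + y ^ p + p * r := by
  refine ⟨∑ k ∈ Ioo 0 p, x ^ k * y ^ (p - k) * ((p.choose k / p : ℕ) : K),
    sum_mem fun k hk => ?_, ?_⟩
  · obtain ⟨hk0, hkp⟩ := mem_Ioo.1 hk
    refine hv.ideal_mono ?_ (hv.mul_mem (hv.mul_mem (hv.pow_mem hx k) (hv.pow_mem hy (p - k)))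
      (hv.natCast_mem _))
    push_cast [hkp.le]
    zify at hk0 hkp
    rcases le_total a b with hab | hab <;> nlinarith
  · rw [add_pow_prime_eq hp, mul_assoc, mul_assoc, mul_sum, mul_sum]
    congr 2
    refine sum_congr rfl fun k hk => ?_
    obtain ⟨hk0, hkp⟩ := mem_Ioo.1 hk
    rw [← mul_pow_sub_one hk0.ne' x, ← mul_pow_sub_one (Nat.sub_pos_of_lt hkp).ne' y]
    ring

section ArtinSchreier

variable {x A : K} {N E : ℤ}

theorem hasVal_of_pow_sub_self_eq (hv : IsDiscVal v) (hp : p.Prime) (hN : 1 ≤ N)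
    (hA : HasVal v A (-(p * N))) (hx : x ^ p - x = A) : HasVal v x (-N) := by
  have hp2 : (2 : ℤ) ≤ p := by exact_mod_cast hp.two_le
  rcases eq_zero_or_hasVal v x with h0 | hval
  · exact absurd (by rw [← hx, h0, zero_pow hp.ne_zero, sub_zero]) hA.1
  rcases lt_or_ge (v x) 0 with hneg | hpos
  · have hdom := (hval.pow hv p).sub_of_mem hv (hval.mem hv) (by nlinarith)
    rw [hx] at hdom
    have hmul : (p : ℤ) * v x = p * (-N) := by linarith [hdom.2.symm.trans hA.2]
    exact hval.congr (mul_left_cancel₀ (by omega) hmul)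
  · have hint : x ^ p - x ∈ hv.ideal 0 :=
      sub_mem (hv.ideal_mono (by positivity) (hv.pow_mem (hval.mem hv) p))
        (hv.ideal_mono hpos (hval.mem hv))
    have hle := hA.le_of_mem hv (hx ▸ hint)
    nlinarith

theorem mem_of_eq_pow_add (hv : IsDiscVal v) {k : ℕ} (hk : 2 ≤ k) {z r : K} (hz : z ∈ hv.ideal 1)
    (hr : r ∈ hv.ideal N) (h : z = z ^ k + r) : z ∈ hv.ideal N := by
  rcases eq_zero_or_hasVal v z with h0 | hval
  · exact Or.inl h0
  have hz1 : 1 ≤ v z := hval.le_of_mem hv hz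
  refine Or.inr (not_lt.1 fun hlt => ?_)
  have hdom : z ^ k + r ∈ hv.ideal (v z + 1) := by
    refine add_mem (hv.ideal_mono ?_ (hv.pow_mem (hval.mem hv) k)) (hv.ideal_mono hlt hr)
    zify at hk
    nlinarith
  rw [← h] at hdom
  exact hval.notMem hv (lt_add_one _) hdom

theorem eq_zero_of_add_pow_sub_eq (hv : IsDiscVal v) (hp : p.Prime) (hpE : (p : K) ∈ hv.ideal E)
    (hN : 0 ≤ N) (hNE : (p - 1) * N < E) (hx : x ∈ hv.ideal (-N)) {z : K} (hz : z ∈ hv.ideal 1)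
    (h : (x + z) ^ p - (x + z) = x ^ p - x) : z = 0 := by
  rcases eq_zero_or_hasVal v z with h0 | hval
  · exact h0
  have hz1 : 1 ≤ v z := hval.le_of_mem hv hz
  have hp2 : (2 : ℤ) ≤ p := by exact_mod_cast hp.two_le
  obtain ⟨r, hr, hpow⟩ := hv.exists_add_pow_prime_eq hp hx (hval.mem hv)
    (N := v z - (p - 1) * N) (by linarith) (by nlinarith)
  have hmem := hv.mem_of_eq_pow_add hp.two_le hz (hv.mul_mem hpE hr)
    (by linear_combination hpow - h)
  exact absurd hmem (hval.notMem hv (by linarith))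

theorem mem_of_add_one_add_pow_sub_eq (hv : IsDiscVal v) (hp : p.Prime)
    (hpE : (p : K) ∈ hv.ideal E) (hN : 0 ≤ N) (hx : x ∈ hv.ideal (-N)) {z : K}
    (hz : z ∈ hv.ideal 1) (h : (x + (1 + z)) ^ p - (x + (1 + z)) = x ^ p - x) :
    z ∈ hv.ideal (E - (p - 1) * N) := by
  have hp2 : (2 : ℤ) ≤ p := by exact_mod_cast hp.two_le
  have hz0 : z ∈ hv.ideal 0 := hv.ideal_mono zero_le_one hz
  obtain ⟨r, hr, hpow⟩ := hv.exists_add_pow_prime_eq hp hx (add_mem hv.one_mem hz0)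
    (N := -((p - 1) * N)) (by linarith) (by nlinarith)
  obtain ⟨s, hs, hpow'⟩ := hv.exists_add_pow_prime_eq hp hv.one_mem hz0
    (N := -((p - 1) * N)) (by nlinarith) (by nlinarith)
  rw [one_pow] at hpow'
  exact hv.mem_of_eq_pow_add hp.two_le hz (hv.mul_mem hpE (add_mem hr hs))
    (by linear_combination hpow + hpow' - h)

end ArtinSchreier

end ResidueChar

end IsDiscVal

end Valuation

section BinomialCoefficient

variable {K : Type*} [Field K] [CharZero K] {v : K → ℤ} {p : ℕ}

theorem choose_eq_prod_div_factorial (x : K) (k : ℕ) :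
    Ring.choose x k = (∏ l ∈ range k, (x - l)) / k.factorial := by
  rw [Ring.choose_eq_smul, ← Polynomial.aeval_eq_smeval, Polynomial.aeval_def,
    Polynomial.eval₂_eq_eval_map, descPochhammer_map, descPochhammer_eval_eq_prod_range,
    div_eq_inv_mul, smul_eq_mul]

theorem choose_add_sub_choose (x y : K) (k : ℕ) :
    Ring.choose (x + y) k - Ring.choose x k =
      ∑ i ∈ range k, Ring.choose y (i + 1) * Ring.choose x (k - (i + 1)) := by
  rw [add_comm x, Ring.add_choose_eq k (Commute.all y x),
    Nat.sum_antidiagonal_eq_sum_range_succ fun i j => Ring.choose y i * Ring.choose x j,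
    sum_range_succ', Ring.choose_zero_right, one_mul, Nat.sub_zero, add_sub_cancel_right]

theorem IsDiscVal.choose_mem (hv : IsDiscVal v) (hp : p.Prime) (hpv : (p : K) ∈ hv.ideal 1)
    {x : K} {N : ℤ} (hN : 0 ≤ N) (hx : x ∈ hv.ideal (-N)) {k : ℕ} (hk : k < p) :
    Ring.choose x k ∈ hv.ideal (-(k * N)) := by
  rw [choose_eq_prod_div_factorial, div_eq_mul_inv]
  have hprod := hv.prod_mem (s := range k) (f := fun l => x - (l : K)) fun l _ =>
    sub_mem hx (hv.ideal_mono (neg_nonpos.2 hN) (hv.natCast_mem l))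
  simpa using hv.mul_mem hprod (((hv.hasVal_factorial hp hpv hk).inv hv).mem hv)

theorem HasVal.choose (hv : IsDiscVal v) (hp : p.Prime) (hpv : (p : K) ∈ hv.ideal 1)
    {x : K} {N : ℤ} (hN : 0 < N) (hx : HasVal v x (-N)) {k : ℕ} (hk : k < p) :
    HasVal v (Ring.choose x k) (-(k * N)) := by
  rw [choose_eq_prod_div_factorial, div_eq_mul_inv]
  have hprod := HasVal.prod hv (s := range k) (f := fun l => x - (l : K)) fun l _ =>
    hx.sub_of_mem hv (hv.natCast_mem l) (neg_neg_iff_pos.2 hN)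
  simpa using hprod.mul ((hv.hasVal_factorial hp hpv hk).inv hv) hv

theorem IsDiscVal.choose_mem_of_sub_one_mem (hv : IsDiscVal v) (hp : p.Prime)
    (hpv : (p : K) ∈ hv.ideal 1) {t : K} {B : ℤ} (hB : 0 ≤ B) (ht : t - 1 ∈ hv.ideal B) {k : ℕ}
    (hk2 : 2 ≤ k) (hk : k < p) : Ring.choose t k ∈ hv.ideal B := by
  have ht0 : t ∈ hv.ideal 0 := by
    simpa using add_mem (hv.ideal_mono hB ht) hv.one_mem
  rw [choose_eq_prod_div_factorial, div_eq_mul_inv,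
    ← mul_prod_erase (range k) _ (mem_range.2 (by omega : 1 < k)), Nat.cast_one]
  have hrest := hv.prod_mem (s := (range k).erase 1) (f := fun l => t - (l : K)) fun l _ =>
    sub_mem ht0 (hv.natCast_mem l)
  simpa using hv.mul_mem (hv.mul_mem ht hrest) (((hv.hasVal_factorial hp hpv hk).inv hv).mem hv)

theorem IsDiscVal.choose_add_sub_choose_mem (hv : IsDiscVal v) (hp : p.Prime)
    (hpv : (p : K) ∈ hv.ideal 1) {x g : K} {N G : ℤ} (hG : 0 ≤ G) (hGN : G ≤ N)
    (hx : x ∈ hv.ideal (-N)) (hg : g ∈ hv.ideal (-G)) {k : ℕ} (hk : k < p) :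
    Ring.choose (x + g) k - Ring.choose x k ∈ hv.ideal (N - G - k * N) := by
  rw [choose_add_sub_choose]
  refine sum_mem fun i hi => ?_
  rw [mem_range] at hi
  refine hv.ideal_mono ?_ (hv.mul_mem (hv.choose_mem hp hpv hG hg (k := i + 1) (by omega))
    (hv.choose_mem hp hpv (hG.trans hGN) hx (k := k - (i + 1)) (by omega)))
  push_cast [Nat.succ_le_of_lt hi]
  nlinarith

theorem HasVal.choose_add_sub_choose (hv : IsDiscVal v) (hp : p.Prime)
    (hpv : (p : K) ∈ hv.ideal 1) {x h : K} {N : ℤ} (hN : 0 < N) (hx : HasVal v x (-N))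
    (hh : HasVal v h 0) {k : ℕ} (hk0 : k ≠ 0) (hk : k < p) :
    HasVal v (Ring.choose (x + h) k - Ring.choose x k) (N - k * N) := by
  obtain ⟨k, rfl⟩ := Nat.exists_eq_succ_of_ne_zero hk0
  rw [_root_.choose_add_sub_choose, sum_range_succ', add_comm, zero_add, Ring.choose_one_right,
    Nat.succ_sub_one]
  have hlead := hh.mul (HasVal.choose hv hp hpv hN hx (k := k) (by omega)) hv
  refine (hlead.add_of_mem hv (M := N - k * N) (sum_mem fun i hi => ?_) (by omega)).congr
    (by push_cast; ring)
  rw [mem_range] at hi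
  refine hv.ideal_mono ?_ (hv.mul_mem
    (hv.choose_mem hp hpv le_rfl (by simpa using hh.mem hv) (k := i + 1 + 1) (by omega))
    (hv.choose_mem hp hpv hN.le (hx.mem hv) (k := k + 1 - (i + 1 + 1)) (by omega)))
  push_cast [Nat.succ_le_of_lt hi]
  nlinarith

/-- Translation by an element close to `1` acts on binomial coefficients almost as translation
by `1`, for which Pascal's rule is exact. -/
theorem IsDiscVal.choose_add_sub_choose_sub_mem (hv : IsDiscVal v) (hp : p.Prime)
    (hpv : (p : K) ∈ hv.ideal 1) {x t : K} {N B : ℤ} (hN : 0 ≤ N) (hB : 0 ≤ B)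
    (hx : x ∈ hv.ideal (-N)) (ht : t - 1 ∈ hv.ideal B) {k : ℕ} (hk : k + 1 < p) :
    Ring.choose (x + t) (k + 1) - Ring.choose x (k + 1) - Ring.choose x k
      ∈ hv.ideal (B - k * N) := by
  rw [choose_add_sub_choose, sum_range_succ', zero_add, Ring.choose_one_right,
    Nat.add_sub_cancel, add_sub_assoc, ← sub_one_mul]
  refine add_mem (sum_mem fun i hi => ?_)
    (hv.ideal_mono (by omega) (hv.mul_mem ht (hv.choose_mem hp hpv hN hx (k := k) (by omega))))
  rw [mem_range] at hi
  refine hv.ideal_mono ?_ (hv.mul_mem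
    (hv.choose_mem_of_sub_one_mem hp hpv hB ht (k := i + 1 + 1) (by omega) (by omega))
    (hv.choose_mem hp hpv hN hx (k := k + 1 - (i + 1 + 1)) (by omega)))
  push_cast [Nat.succ_le_of_lt hi]
  nlinarith

end BinomialCoefficient

namespace IsDiscVal

variable {K : Type*} [Field K] {v : K → ℤ}

/-- The valuation ring of a normalized discrete valuation. -/
def ring (hv : IsDiscVal v) : ValuationSubring K where
  carrier := hv.ideal 0
  zero_mem' := (hv.ideal 0).zero_mem
  one_mem' := hv.one_mem
  add_mem' := (hv.ideal 0).add_mem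
  neg_mem' := (hv.ideal 0).neg_mem
  mul_mem' := fun hx hy => by simpa using hv.mul_mem hx hy
  mem_or_inv_mem' := fun x => by
    rcases eq_zero_or_hasVal v x with h0 | hval
    · exact Or.inl (Or.inl h0)
    · exact (le_total 0 (v x)).imp Or.inr fun hneg =>
        hv.ideal_mono (neg_nonneg.2 hneg) ((hval.inv hv).mem hv)

theorem mem_ring (hv : IsDiscVal v) {x : K} : x ∈ hv.ring ↔ x ∈ hv.ideal 0 :=
  Iff.rfl

theorem isUnit_iff_hasVal (hv : IsDiscVal v) {x : hv.ring} : IsUnit x ↔ HasVal v (x : K) 0 := by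
  constructor
  · rintro ⟨u, rfl⟩
    refine hv.hasVal_iff.2 ⟨(u : hv.ring).2, fun hu => ?_⟩
    have hmul : ((u : hv.ring) : K) * ((u⁻¹ : hv.ringˣ) : hv.ring) = 1 := by
      exact_mod_cast congrArg Subtype.val u.mul_inv
    have hone := hv.mul_mem hu ((u⁻¹ : hv.ringˣ) : hv.ring).2
    rw [hmul] at hone
    exact (HasVal.one hv).notMem hv (by norm_num) hone
  · intro hx
    exact IsUnit.of_mul_eq_one ⟨(x : K)⁻¹, hv.mem_ring.2 (((hx.inv hv).congr neg_zero).mem hv)⟩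
      (Subtype.ext (mul_inv_cancel₀ hx.1))

end IsDiscVal

section TotallyRamified

variable {K L : Type*} [Field K] [Field L] [Algebra K L] {vK : K → ℤ} {vL : L → ℤ} {n : ℕ}

/-- `L / K` is totally ramified of degree `n` with respect to the normalized discrete valuations
`vK` and `vL`. -/
structure IsTotallyRamified (n : ℕ) (vK : K → ℤ) (vL : L → ℤ) : Prop where
  base : IsDiscVal vK
  top : IsDiscVal vL
  pos : 0 < n
  finrank_eq : Module.finrank K L = n
  map_eq : ∀ x : K, x ≠ 0 → vL (algebraMap K L x) = n * vK x

/-- A family of `n` elements whose valuations represent the residue classes modulo `n`. When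
`L / K` is totally ramified of degree `n`, this is a `K`-basis along which valuations of linear
combinations can be read off coefficientwise. -/
structure IsValBasis (n : ℕ) (vL : L → ℤ) {ι : Type*} [Fintype ι] (B : ι → L) (val : ι → ℤ) :
    Prop where
  card_eq : Fintype.card ι = n
  hasVal : ∀ i, HasVal vL (B i) (val i)
  incongruent : ∀ i j, (n : ℤ) ∣ val i - val j → i = j

namespace IsTotallyRamified

variable (h : IsTotallyRamified n vK vL)

section Smul

variable {c : K} {z : L} {M N : ℤ}

theorem hasVal_smul (h : IsTotallyRamified n vK vL) (hc : HasVal vK c M) (hz : HasVal vL z N) :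
    HasVal vL (c • z) (n * M + N) := by
  rw [Algebra.smul_def]
  exact HasVal.mul ⟨by simpa using hc.1, by rw [h.map_eq c hc.1, hc.2]⟩ hz h.top

theorem hasVal_algebraMap (h : IsTotallyRamified n vK vL) (hc : HasVal vK c M) :
    HasVal vL (algebraMap K L c) (n * M) := by
  simpa [Algebra.smul_def] using h.hasVal_smul hc (HasVal.one h.top)

theorem smul_mem (hc : c ∈ h.base.ideal M) (hz : z ∈ h.top.ideal N) :
    c • z ∈ h.top.ideal (n * M + N) := by
  rcases eq_zero_or_hasVal vK c with h0 | hval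
  · exact Or.inl (by simp [h0])
  rcases eq_zero_or_hasVal vL z with h0 | hval'
  · exact Or.inl (by simp [h0])
  refine h.top.ideal_mono ?_ ((h.hasVal_smul hval hval').mem h.top)
  have hM := mul_le_mul_of_nonneg_left (hval.le_of_mem h.base hc) n.cast_nonneg
  have hN := hval'.le_of_mem h.top hz
  exact add_le_add hM hN

theorem algebraMap_mem (hc : c ∈ h.base.ideal M) : algebraMap K L c ∈ h.top.ideal (n * M) := by
  simpa [Algebra.smul_def] using h.smul_mem hc h.top.one_mem

theorem mem_of_smul_mem {k : ℤ} (hz : HasVal vL z N) (hcz : c • z ∈ h.top.ideal M)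
    (hk : n * (k - 1) + N < M) : c ∈ h.base.ideal k := by
  rcases eq_zero_or_hasVal vK c with h0 | hval
  · exact Or.inl h0
  refine Or.inr (not_lt.1 fun hlt => ?_)
  have hle := (h.hasVal_smul hval hz).le_of_mem h.top hcz
  have hmul : (n : ℤ) * vK c ≤ n * (k - 1) :=
    mul_le_mul_of_nonneg_left (by omega) n.cast_nonneg
  omega

end Smul

section ValBasis

variable {ι : Type*} [Fintype ι] {B : ι → L} {val : ι → ℤ} {c : ι → K} {M : ℤ}

theorem sum_smul_mem_iff (hB : IsValBasis n vL B val) :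
    ∑ i, c i • B i ∈ h.top.ideal M ↔ ∀ i, c i • B i ∈ h.top.ideal M := by
  refine ⟨fun hsum i => h.top.mem_of_sum_mem (f := fun i => c i • B i) ?_ hsum (mem_univ i),
    fun hc => sum_mem fun i _ => hc i⟩
  intro i _ j _ hi hj hij
  have hvi := h.hasVal_smul ⟨(smul_ne_zero_iff.1 hi).1, rfl⟩ (hB.hasVal i)
  have hvj := h.hasVal_smul ⟨(smul_ne_zero_iff.1 hj).1, rfl⟩ (hB.hasVal j)
  rw [hvi.2, hvj.2] at hij
  exact hB.incongruent i j ⟨vK (c j) - vK (c i), by linarith⟩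

theorem linearIndependent (h : IsTotallyRamified n vK vL) (hB : IsValBasis n vL B val) :
    LinearIndependent K B := by
  rw [Fintype.linearIndependent_iff]
  intro c hc i
  by_contra hi
  have hval := h.hasVal_smul ⟨hi, rfl⟩ (hB.hasVal i)
  exact hval.notMem h.top (lt_add_one _) ((h.sum_smul_mem_iff hB).1 (Or.inl hc) i)

theorem exists_sum_smul_eq (h : IsTotallyRamified n vK vL) (hB : IsValBasis n vL B val) (z : L) :
    ∃ c : ι → K, ∑ i, c i • B i = z := by
  have := Module.finite_of_finrank_pos (h.finrank_eq ▸ h.pos)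
  have hspan := (h.linearIndependent hB).span_eq_top_of_card_eq_finrank'
    (hB.card_eq.trans h.finrank_eq.symm)
  exact (Submodule.mem_span_range_iff_exists_fun K).1 (hspan ▸ Submodule.mem_top)

theorem isValBasis_mul_pow (h : IsTotallyRamified n vK vL) {b π : L} {N : ℤ}
    (hb : HasVal vL b N) (hπ : HasVal vL π 1) :
    IsValBasis n vL (fun i : Fin n => b * π ^ (i : ℕ)) (fun i => N + (i : ℕ)) where
  card_eq := Fintype.card_fin n
  hasVal i := by simpa using hb.mul (hπ.pow h.top i) h.top
  incongruent i j hij := by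
    have hzero := Int.eq_zero_of_abs_lt_dvd hij (by rw [abs_lt]; omega)
    exact Fin.ext (by omega)

/-- The residue field does not grow, so `z / b` is congruent to an element of `K`. -/
theorem exists_sub_smul_mem {b z : L} {N k : ℤ} (hb : HasVal vL b N)
    (hz : HasVal vL z (n * k + N)) :
    ∃ c, HasVal vK c k ∧ z - c • b ∈ h.top.ideal (n * k + N + 1) := by
  obtain ⟨π, hπ⟩ := h.top.exists_hasVal 1
  have hB := h.isValBasis_mul_pow hb hπ
  obtain ⟨c, rfl⟩ := h.exists_sum_smul_eq hB z
  let i₀ : Fin n := ⟨0, h.pos⟩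
  have hrest : ∑ i, c i • (b * π ^ (i : ℕ)) - c i₀ • b ∈ h.top.ideal (n * k + N + 1) := by
    have hsplit := add_sum_erase univ (fun i : Fin n => c i • (b * π ^ (i : ℕ))) (mem_univ i₀)
    rw [← hsplit, show b * π ^ (i₀ : ℕ) = b by simp [i₀], add_sub_cancel_left]
    refine sum_mem fun i hi => ?_
    have hmem := (h.sum_smul_mem_iff hB).1 (hz.mem h.top) i
    rcases eq_zero_or_hasVal vK (c i) with h0 | hci
    · exact Or.inl (by simp [h0])
    have hval := h.hasVal_smul hci (hB.hasVal i)
    have hne : n * vK (c i) + (N + (i : ℕ)) ≠ n * k + N := fun heq =>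
      (mem_erase.1 hi).1 (hB.incongruent i i₀
        ⟨k - vK (c i), by simp only [i₀]; push_cast; linarith⟩)
    exact h.top.ideal_mono ((hval.le_of_mem h.top hmem).lt_of_ne' hne) (hval.mem h.top)
  have hlead : HasVal vL (c i₀ • b) (n * k + N) := by
    simpa using hz.sub_of_mem h.top hrest (lt_add_one _)
  have hval : HasVal vK (c i₀) (vK (c i₀)) := ⟨(smul_ne_zero_iff.1 hlead.1).1, rfl⟩
  have hmul : (n : ℤ) * vK (c i₀) = n * k := by
    have := (h.hasVal_smul hval hb).2.symm.trans hlead.2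
    linarith
  exact ⟨c i₀, hval.congr (mul_left_cancel₀ (by exact_mod_cast h.pos.ne') hmul), hrest⟩

end ValBasis

section Integers

/-- The valuation ring of `L`, as an algebra over that of `K`. -/
def integers : Subalgebra h.base.ring L where
  carrier := h.top.ideal 0
  add_mem' := (h.top.ideal 0).add_mem
  mul_mem' := fun hx hy => by simpa using h.top.mul_mem hx hy
  algebraMap_mem' c := by
    have hc := h.algebraMap_mem (M := 0) c.2
    rwa [mul_zero] at hc

theorem mem_integers {z : L} : z ∈ h.integers ↔ z ∈ h.top.ideal 0 :=
  Iff.rfl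

theorem integers_fg : (Subalgebra.toSubmodule h.integers).FG := by
  obtain ⟨π, hπ⟩ := h.top.exists_hasVal 1
  have hB := h.isValBasis_mul_pow (HasVal.one h.top) hπ
  refine Submodule.fg_def.2 ⟨_, Set.finite_range fun i : Fin n => 1 * π ^ (i : ℕ),
    le_antisymm ?_ ?_⟩
  · rw [Submodule.span_le]
    rintro _ ⟨i, rfl⟩
    exact h.mem_integers.2 (h.top.ideal_mono (by positivity) ((hB.hasVal i).mem h.top))
  · intro z hz
    obtain ⟨c, rfl⟩ := h.exists_sum_smul_eq hB z
    refine sum_mem fun i _ => ?_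
    have hc : c i ∈ h.base.ring :=
      h.base.mem_ring.2 <| h.mem_of_smul_mem (hB.hasVal i)
        ((h.sum_smul_mem_iff hB).1 (h.mem_integers.1 hz) i) (by have := i.2; omega)
    exact Submodule.smul_mem _ (⟨c i, hc⟩ : h.base.ring) (Submodule.subset_span ⟨i, rfl⟩)

theorem isIntegral_iff {z : L} : IsIntegral h.base.ring z ↔ z ∈ h.top.ideal 0 := by
  refine ⟨fun hz => ?_, fun hz =>
    IsIntegral.of_mem_of_fg h.integers h.integers_fg z (h.mem_integers.2 hz)⟩
  let φ : h.base.ring →+* h.top.ring :=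
    (algebraMap h.base.ring L).codRestrict h.top.ring fun c =>
      h.top.mem_ring.2 (h.mem_integers.1 (h.integers.algebraMap_mem c))
  have hz' : IsIntegral h.top.ring z := hz.map_of_comp_eq φ (RingHom.id L) rfl
  obtain ⟨y, rfl⟩ := IsIntegrallyClosed.isIntegral_iff.1 hz'
  exact y.2

theorem map_mem (σ : L ≃ₐ[K] L) {z : L} {N : ℤ} (hz : z ∈ h.top.ideal N) :
    σ z ∈ h.top.ideal N := by
  rcases eq_zero_or_hasVal vL z with h0 | hval
  · exact Or.inl (by simp [h0])
  obtain ⟨c, hc⟩ := h.base.exists_hasVal (-vL z)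
  have hint : c • z ^ n ∈ h.top.ideal 0 :=
    ((h.hasVal_smul hc (hval.pow h.top n)).congr (by ring)).mem h.top
  have hint' : c • (σ z) ^ n ∈ h.top.ideal 0 := by
    rw [← map_pow, ← map_smul]
    exact h.isIntegral_iff.1 ((h.isIntegral_iff.2 hint).map
      (σ.toAlgHom.restrictScalars h.base.ring))
  have hval' : HasVal vL (σ z) (vL (σ z)) := ⟨by simpa using hval.1, rfl⟩
  have hle := (h.hasVal_smul hc (hval'.pow h.top n)).le_of_mem h.top hint'
  have hn : (0 : ℤ) < n := by exact_mod_cast h.pos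
  exact Or.inr ((hval.le_of_mem h.top hz).trans (by nlinarith))

end Integers

end IsTotallyRamified

section Shift

variable {f g : Module.End K L} {M N : ℤ} {z : L}

namespace IsDiscVal

/-- The additive group of operators that raise valuations by at least `N`. -/
def shift (K : Type*) [Field K] [Algebra K L] (hv : IsDiscVal vL) (N : ℤ) :
    AddSubgroup (Module.End K L) where
  carrier := {f | ∀ M : ℤ, ∀ z ∈ hv.ideal M, f z ∈ hv.ideal (M + N)}
  zero_mem' := fun _ _ _ => Or.inl rfl
  add_mem' := fun hf hg M z hz => add_mem (hf M z hz) (hg M z hz)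
  neg_mem' := fun hf M z hz => neg_mem (hf M z hz)

variable {hv : IsDiscVal vL}

theorem shift_apply (hf : f ∈ hv.shift K N) (hz : z ∈ hv.ideal M) : f z ∈ hv.ideal (M + N) :=
  hf M z hz

theorem shift_mono (h : N ≤ M) (hf : f ∈ hv.shift K M) : f ∈ hv.shift K N :=
  fun L z hz => hv.ideal_mono (by omega) (hf L z hz)

theorem shift_mul (hf : f ∈ hv.shift K M) (hg : g ∈ hv.shift K N) :
    f * g ∈ hv.shift K (M + N) :=
  fun L z hz => hv.ideal_mono (by omega) (hf _ _ (hg L z hz))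

theorem shift_pow (hf : f ∈ hv.shift K N) (k : ℕ) : f ^ k ∈ hv.shift K (k * N) := by
  induction k with
  | zero => exact fun _ _ hz => by simpa using hz
  | succ k ih =>
    rw [pow_succ]
    exact shift_mono (le_of_eq (by push_cast; ring)) (shift_mul ih hf)

end IsDiscVal

namespace IsTotallyRamified

variable (h : IsTotallyRamified n vK vL)

theorem shift_smul {c : K} (hc : c ∈ h.base.ideal M) (hf : f ∈ h.top.shift K N) :
    c • f ∈ h.top.shift K (n * M + N) :=
  fun L z hz => h.top.ideal_mono (by omega) (h.smul_mem hc (hf L z hz))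

theorem mem_shift_of_isValBasis {ι : Type*} [Fintype ι] {B : ι → L} {val : ι → ℤ}
    (hB : IsValBasis n vL B val) (hf : ∀ i, f (B i) ∈ h.top.ideal (val i + N)) :
    f ∈ h.top.shift K N := by
  intro M z hz
  obtain ⟨c, rfl⟩ := h.exists_sum_smul_eq hB z
  rw [map_sum]
  refine sum_mem fun i _ => ?_
  rw [map_smul]
  rcases eq_zero_or_hasVal vK (c i) with h0 | hci
  · exact Or.inl (by simp [h0])
  · have hle := (h.hasVal_smul hci (hB.hasVal i)).le_of_mem h.top ((h.sum_smul_mem_iff hB).1 hz i)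
    exact h.top.ideal_mono (by omega) (h.smul_mem (hci.mem h.base) (hf i))

theorem hasVal_apply_of_dvd (hf : f ∈ h.top.shift K N) {b : L} {M₀ : ℤ} (hb : HasVal vL b M₀)
    (hfb : HasVal vL (f b) (M₀ + N)) (hz : HasVal vL z M) (hM : (n : ℤ) ∣ M - M₀) :
    HasVal vL (f z) (M + N) := by
  obtain ⟨k, hk⟩ := hM
  obtain ⟨c, hc, hmem⟩ := h.exists_sub_smul_mem hb (hz.congr (by omega) : HasVal vL z (n * k + M₀))
  have hsplit : f z = c • f b + f (z - c • b) := by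
    rw [map_sub, map_smul, add_sub_cancel]
  rw [hsplit]
  exact ((h.hasVal_smul hc hfb).add_of_mem h.top (IsDiscVal.shift_apply hf hmem)
    (by omega)).congr (by omega)

end IsTotallyRamified

end Shift

end TotallyRamified

section MatrixUnits

variable {ι : Type*} [Fintype ι] [LinearOrder ι]

/-- Modulo the maximal ideal `C` is a left inverse of the triangular matrix `T`. -/
theorem isUnit_diag_of_mul_sub_one_mem {R : Type*} [CommRing R] [IsLocalRing R]
    {C T : Matrix ι ι R} (hT : T.IsUpperTriangular)
    (hCT : ∀ i j, (C * T - 1) i j ∈ IsLocalRing.maximalIdeal R) (j : ι) : IsUnit (T j j) := by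
  let φ := IsLocalRing.residue R
  have hmul : C.map φ * T.map φ = 1 := by
    rw [← Matrix.map_mul, ← Matrix.map_one φ (map_zero φ) (map_one φ)]
    ext i l
    exact Ideal.Quotient.eq.2 (hCT i l)
  have hdet : (T.map φ).det ≠ 0 := by
    refine right_ne_zero_of_mul (a := (C.map φ).det) ?_
    rw [← Matrix.det_mul, hmul, Matrix.det_one]
    exact one_ne_zero
  have htri : (T.map φ).IsUpperTriangular := fun i l hil => by
    rw [Matrix.map_apply, hT hil, map_zero]
  rw [Matrix.det_of_isUpperTriangular htri, prod_ne_zero_iff] at hdet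
  exact IsLocalRing.residue_ne_zero_iff_isUnit _ |>.1 (hdet j (mem_univ j))

variable {K : Type*} [Field K] {v : K → ℤ}

/-- Conjugation by powers of the uniformizer reduces this to matrices over the valuation ring. -/
theorem IsDiscVal.hasVal_diag_of_mul_sub_diagonal_mem (hv : IsDiscVal v) {π : K}
    (hπ : HasVal v π 1) {s t : ι → ℤ} {C T : Matrix ι ι K} (hC : ∀ i j, C i j ∈ hv.ideal (-t j))
    (hT : ∀ j l, T j l ∈ hv.ideal (t j - s l)) (htri : T.IsUpperTriangular)
    (hCT : ∀ i l, (C * T - Matrix.diagonal fun i => π ^ (-s i)) i l ∈ hv.ideal (1 - s l)) (j : ι) :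
    HasVal v (T j j) (t j - s j) := by
  have hpow (k : ℤ) : HasVal v (π ^ k) k := (hπ.zpow hv k).congr (mul_one k)
  have hmem {x : K} {N k : ℤ} (hx : x ∈ hv.ideal N) : x * π ^ k ∈ hv.ideal (N + k) :=
    hv.mul_mem hx ((hpow k).mem hv)
  let C' : Matrix ι ι hv.ring := Matrix.of fun i j =>
    ⟨C i j * π ^ t j, hv.ideal_mono (by omega) (hmem (hC i j))⟩
  let T' : Matrix ι ι hv.ring := Matrix.of fun j l =>
    ⟨T j l * π ^ (s l - t j), hv.ideal_mono (by omega) (hmem (hT j l))⟩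
  have hCT' (i l : ι) : (((C' * T' - 1) i l : hv.ring) : K) =
      (C * T - Matrix.diagonal fun i => π ^ (-s i)) i l * π ^ s l := by
    simp only [Matrix.sub_apply, Matrix.mul_apply, sub_mul, sum_mul]
    push_cast
    congr 1
    · refine sum_congr rfl fun j _ => ?_
      simp only [C', T', Matrix.of_apply, zpow_sub₀ hπ.1]
      field_simp [hπ.1]
    · rcases eq_or_ne i l with rfl | hil
      · simp [inv_mul_cancel₀ (hpow (s i)).1]
      · simp [hil]
  have hunit : IsUnit (T' j j) := by
    refine isUnit_diag_of_mul_sub_one_mem (C := C') (fun i l hil => ?_) (fun i l => ?_) j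
    · exact Subtype.ext (by simp [T', htri hil])
    · rw [IsLocalRing.mem_maximalIdeal, mem_nonunits_iff, hv.isUnit_iff_hasVal, hCT']
      exact fun hval => hval.notMem hv one_pos (hv.ideal_mono (by omega) (hmem (hCT i l)))
  have hval := (hv.isUnit_iff_hasVal.1 hunit).mul (hpow (t j - s j)) hv
  simpa [T', mul_assoc, ← zpow_add₀ hπ.1] using hval

end MatrixUnits

section ApproxScaffold

/-- The `w_j` are the smallest gaps at distance `j` in the sequence `d_0, …, d_{n-1}`. -/
def IsMinGap (n : ℕ) (d w : ℕ → ℤ) : Prop :=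
  ∀ j < n, IsLeast {x : ℤ | ∃ a : ℕ, a < n - j ∧ x = d (j + a) - d a} (w j)

namespace IsMinGap

variable {n : ℕ} {d w : ℕ → ℤ}

theorem le_sub (hw : IsMinGap n d w) {j a : ℕ} (hja : j + a < n) : w j ≤ d (j + a) - d a :=
  (hw j (by omega)).2 ⟨a, by omega, rfl⟩

theorem exists_eq_sub (hw : IsMinGap n d w) {j : ℕ} (hj : j < n) :
    ∃ a, j + a < n ∧ w j = d (j + a) - d a := by
  obtain ⟨a, ha, hwa⟩ := (hw j hj).1
  exact ⟨a, by omega, hwa⟩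

theorem apply_zero (hw : IsMinGap n d w) (hn : 0 < n) : w 0 = 0 := by
  obtain ⟨a, -, ha⟩ := hw.exists_eq_sub hn
  rw [ha, zero_add, sub_self]

end IsMinGap

variable {K L : Type*} [Field K] [Field L] [Algebra K L] {vK : K → ℤ} {vL : L → ℤ} {n : ℕ}

/-- The upper triangular Toeplitz matrix with first row `c`. -/
def upperToeplitz {R : Type*} [Zero R] (c : Fin n → R) : Matrix (Fin n) (Fin n) R :=
  Matrix.of fun a l => if a ≤ l then c (l - a) else 0

/-- The operators of a `K`-space `A` of endomorphisms of `L` that preserve the valuation ring of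
`vL`; for `A = K[G]` this is the associated order. -/
def associatedOrder (hv : IsDiscVal vL) (A : Submodule K (Module.End K L)) :
    Set (Module.End K L) :=
  {α | α ∈ A ∧ ∀ z ∈ hv.ideal 0, α z ∈ hv.ideal 0}

/-- The valuation ring of `vL` is the orbit of `ν` under the associated order of `A`. -/
def IsOrderGenerator (hv : IsDiscVal vL) (A : Submodule K (Module.End K L)) (ν : L) : Prop :=
  ∀ z, z ∈ hv.ideal 0 ↔ ∃ α, α ∈ associatedOrder hv A ∧ α ν = z

/-- Operators `U 0 = 1, U 1, …, U (n - 1)` on `L` whose values on `ρ` have pairwise incongruent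
valuations `val a`, with `d a = ⌊val a / n⌋`, and which on `ρ` multiply like powers of a single
nilpotent operator up to an error that is negligible for integrality questions. -/
structure IsApproxScaffold (h : IsTotallyRamified n vK vL) (U : ℕ → Module.End K L) (ρ : L)
    (val d : ℕ → ℤ) : Prop where
  zero : U 0 = 1
  eq_zero : ∀ a, n ≤ a → U a = 0
  hasVal : ∀ a < n, HasVal vL (U a ρ) (val a)
  incongruent : ∀ a < n, ∀ b < n, (n : ℤ) ∣ val a - val b → a = b
  mul_le : ∀ a < n, n * d a ≤ val a
  lt_mul : ∀ a < n, val a < n * d a + n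
  error : ∀ j < n, ∀ a < n, (U j * U a - U (j + a)) ρ ∈ h.top.ideal (n * (d j - d 0 + d a) + n)

namespace IsApproxScaffold

variable {h : IsTotallyRamified n vK vL} {U : ℕ → Module.End K L} {ρ : L} {val d w : ℕ → ℤ}

theorem isValBasis (hU : IsApproxScaffold h U ρ val d) :
    IsValBasis n vL (fun a : Fin n => U a ρ) (fun a => val a) where
  card_eq := Fintype.card_fin n
  hasVal a := hU.hasVal a a.2
  incongruent a b hab := Fin.ext (hU.incongruent a a.2 b b.2 hab)

theorem smul_apply_mem_iff (hU : IsApproxScaffold h U ρ val d) {c : K} {k : ℤ} (a : Fin n) :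
    c • U a ρ ∈ h.top.ideal (n * k) ↔ c ∈ h.base.ideal (k - d a) := by
  have hle := hU.mul_le a a.2
  have hlt := hU.lt_mul a a.2
  refine ⟨fun hc => h.mem_of_smul_mem (hU.hasVal a a.2) hc (by linarith), fun hc => ?_⟩
  exact h.top.ideal_mono (by linarith) (h.smul_mem hc ((hU.hasVal a a.2).mem h.top))

theorem sum_smul_apply_mem_iff (hU : IsApproxScaffold h U ρ val d) {c : Fin n → K} {k : ℤ} :
    ∑ a, c a • U a ρ ∈ h.top.ideal (n * k) ↔ ∀ a : Fin n, c a ∈ h.base.ideal (k - d a) :=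
  (h.sum_smul_mem_iff hU.isValBasis).trans (forall_congr' fun a => hU.smul_apply_mem_iff a)

theorem exists_sum_smul_apply_eq (hU : IsApproxScaffold h U ρ val d) {z : L}
    (hz : z ∈ h.top.ideal 0) :
    ∃ e : Fin n → K, (∀ a : Fin n, e a ∈ h.base.ideal (-d a)) ∧ ∑ a, e a • U a ρ = z := by
  obtain ⟨e, rfl⟩ := h.exists_sum_smul_eq hU.isValBasis z
  exact ⟨e, by simpa using hU.sum_smul_apply_mem_iff (k := 0).1 (by simpa using hz), rfl⟩

theorem sum_smul_apply_add (hU : IsApproxScaffold h U ρ val d) (c : Fin n → K) (a : Fin n) :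
    ∑ j : Fin n, c j • U (j + a) ρ = ∑ l, upperToeplitz c a l • U l ρ := by
  have : NeZero n := ⟨h.pos.ne'⟩
  refine Fintype.sum_equiv (Equiv.addRight a) _ _ fun j => ?_
  have hj := j.2
  have ha := a.2
  simp only [Equiv.coe_addRight, upperToeplitz, Matrix.of_apply, add_sub_cancel_right]
  by_cases hja : (j + a : ℕ) < n
  · have hval : ((j + a : Fin n) : ℕ) = j + a := Fin.val_add_eq_of_add_lt hja
    rw [if_pos (Fin.le_def.2 (by omega)), hval]
  · have hval : ((j + a : Fin n) : ℕ) = j + a - n := by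
      rw [Fin.val_add, Nat.mod_eq_sub_mod (by omega), Nat.mod_eq_of_lt (by omega)]
    rw [if_neg (fun hle => by have := Fin.le_def.1 hle; omega), hU.eq_zero _ (not_lt.1 hja)]
    simp

theorem error_mem (hU : IsApproxScaffold h U ρ val d) {c : Fin n → K}
    (hc : ∀ j : Fin n, c j ∈ h.base.ideal (d 0 - d j)) (a : Fin n) :
    ∑ j : Fin n, c j • (U j * U a - U (j + a)) ρ ∈ h.top.ideal (n * d a + n) :=
  sum_mem fun j _ => h.top.ideal_mono (le_of_eq (by ring))
    (h.smul_mem (hc j) (hU.error j j.2 a a.2))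

theorem sum_smul_apply_apply (c : Fin n → K) (a : Fin n) :
    (∑ j : Fin n, c j • U j) (U a ρ) =
      ∑ j : Fin n, c j • U (j + a) ρ + ∑ j : Fin n, c j • (U j * U a - U (j + a)) ρ := by
  rw [← sum_add_distrib, LinearMap.sum_apply]
  refine sum_congr rfl fun j _ => ?_
  rw [← smul_add, LinearMap.sub_apply, add_sub_cancel]
  rfl

theorem preserves_iff (hU : IsApproxScaffold h U ρ val d) {α : Module.End K L} :
    (∀ z ∈ h.top.ideal 0, α z ∈ h.top.ideal 0) ↔
      ∀ a : Fin n, α (U a ρ) ∈ h.top.ideal (n * d a) := by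
  constructor
  · intro hα a
    obtain ⟨c, hc⟩ := h.base.exists_hasVal (-d a)
    have hmem : c • U a ρ ∈ h.top.ideal 0 := by
      simpa using (hU.smul_apply_mem_iff (k := 0) a).2 (by simpa using hc.mem h.base)
    have hinv := h.smul_mem ((hc.inv h.base).mem h.base) (hα _ hmem)
    rwa [map_smul, inv_smul_smul₀ hc.1, neg_neg, add_zero] at hinv
  · intro hα z hz
    obtain ⟨e, he, rfl⟩ := hU.exists_sum_smul_apply_eq hz
    rw [map_sum]
    refine sum_mem fun a _ => ?_
    rw [map_smul]
    exact h.top.ideal_mono (by linarith) (h.smul_mem (he a) (hα a))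

theorem sum_smul_preserves (hU : IsApproxScaffold h U ρ val d) (hw : IsMinGap n d w)
    {c : Fin n → K} (hc : ∀ j : Fin n, c j ∈ h.base.ideal (-w j)) :
    ∀ z ∈ h.top.ideal 0, (∑ j : Fin n, c j • U j) z ∈ h.top.ideal 0 := by
  refine hU.preserves_iff.2 fun a => ?_
  rw [sum_smul_apply_apply]
  refine add_mem ?_ (h.top.ideal_mono (by omega) (hU.error_mem (fun j => ?_) a))
  · refine sum_mem fun j _ => ?_
    by_cases hja : (j + a : ℕ) < n
    · have hgap := hw.le_sub hja
      exact (hU.smul_apply_mem_iff ⟨j + a, hja⟩).2 (h.base.ideal_mono (by dsimp only; omega) (hc j))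
    · rw [hU.eq_zero _ (not_lt.1 hja)]
      exact Or.inl (by simp)
  · have hgap := hw.le_sub (by simp : (j : ℕ) + 0 < n)
    rw [add_zero] at hgap
    exact h.base.ideal_mono (by omega) (hc j)

theorem coeff_mem_of_preserves (hU : IsApproxScaffold h U ρ val d) (hw : IsMinGap n d w)
    {c : Fin n → K}
    (hα : ∀ z ∈ h.top.ideal 0, (∑ j : Fin n, c j • U j) z ∈ h.top.ideal 0) (j : Fin n) :
    c j ∈ h.base.ideal (-w j) := by
  have happ := hU.preserves_iff.1 hα
  have hcrude : ∀ j : Fin n, c j ∈ h.base.ideal (d 0 - d j) := by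
    refine hU.sum_smul_apply_mem_iff.1 ?_
    simpa [hU.zero, LinearMap.sum_apply] using happ ⟨0, h.pos⟩
  obtain ⟨a, hja, hwa⟩ := hw.exists_eq_sub j.2
  let a' : Fin n := ⟨a, by omega⟩
  have hmain := sub_mem (happ a') (h.top.ideal_mono (by omega) (hU.error_mem hcrude a'))
  rw [sum_smul_apply_apply, add_sub_cancel_right, hU.sum_smul_apply_add] at hmain
  have hmem := hU.sum_smul_apply_mem_iff.1 hmain ⟨j + a, hja⟩
  have hsub : (⟨j + a, hja⟩ : Fin n) - a' = j := by
    ext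
    rw [Fin.sub_val_of_le (Fin.le_def.2 (Nat.le_add_left _ _))]
    exact Nat.add_sub_cancel _ _
  rw [upperToeplitz, Matrix.of_apply, if_pos (Fin.le_def.2 (Nat.le_add_left _ _)), hsub] at hmem
  exact h.base.ideal_mono (by simp only [a']; omega) hmem

theorem mem_associatedOrder_iff (hU : IsApproxScaffold h U ρ val d) (hw : IsMinGap n d w)
    {α : Module.End K L} :
    α ∈ associatedOrder h.top (Submodule.span K (Set.range fun j : Fin n => U j)) ↔
      ∃ c : Fin n → K, (∀ j : Fin n, c j ∈ h.base.ideal (-w j)) ∧ ∑ j : Fin n, c j • U j = α := by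
  rw [associatedOrder, Set.mem_ofPred_eq, Submodule.mem_span_range_iff_exists_fun]
  constructor
  · rintro ⟨⟨c, rfl⟩, hα⟩
    exact ⟨c, hU.coeff_mem_of_preserves hw hα, rfl⟩
  · rintro ⟨c, hc, rfl⟩
    exact ⟨⟨c, rfl⟩, hU.sum_smul_preserves hw hc⟩

theorem isOrderGenerator_smul (hU : IsApproxScaffold h U ρ val d) (hw : IsMinGap n d w)
    (hwd : ∀ j < n, w j = d j - d 0) {c : K} (hc : HasVal vK c (-d 0)) :
    IsOrderGenerator h.top (Submodule.span K (Set.range fun j : Fin n => U j)) (c • ρ) := by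
  have hcρ : c • ρ ∈ h.top.ideal 0 := by
    simpa [hU.zero] using
      (hU.smul_apply_mem_iff (k := 0) ⟨0, h.pos⟩).2 (by simpa using hc.mem h.base)
  refine fun z => ⟨fun hz => ?_, fun ⟨α, hα, hαz⟩ => hαz ▸ hα.2 _ hcρ⟩
  obtain ⟨e, he, rfl⟩ := hU.exists_sum_smul_apply_eq hz
  refine ⟨∑ j : Fin n, (e j * c⁻¹) • U j, (hU.mem_associatedOrder_iff hw).2
    ⟨_, fun j => ?_, rfl⟩, ?_⟩
  · have := hwd j j.2
    exact h.base.ideal_mono (by omega) (h.base.mul_mem (he j) ((hc.inv h.base).mem h.base))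
  · rw [LinearMap.sum_apply]
    refine sum_congr rfl fun j _ => ?_
    rw [LinearMap.smul_apply, map_smul, smul_smul, inv_mul_cancel_right₀ hc.1]

theorem sum_vecMul_upperToeplitz_sub_mem (hU : IsApproxScaffold h U ρ val d)
    (hw : IsMinGap n d w) {c e : Fin n → K} (hc : ∀ j : Fin n, c j ∈ h.base.ideal (-w j))
    (he : ∀ a : Fin n, e a ∈ h.base.ideal (-d a)) :
    (∑ j : Fin n, c j • U j) (∑ a : Fin n, e a • U a ρ) -
      ∑ l : Fin n, Matrix.vecMul c (upperToeplitz e) l • U l ρ ∈ h.top.ideal n := by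
  have hcrude (j : Fin n) : c j ∈ h.base.ideal (d 0 - d j) := by
    have hgap := hw.le_sub (by simp : (j : ℕ) + 0 < n)
    rw [add_zero] at hgap
    exact h.base.ideal_mono (by omega) (hc j)
  have hmain : ∑ l : Fin n, Matrix.vecMul c (upperToeplitz e) l • U l ρ =
      ∑ a : Fin n, e a • ∑ j : Fin n, c j • U (j + a) ρ := by
    simp only [Matrix.vecMul, dotProduct, sum_smul, mul_smul]
    rw [sum_comm]
    simp only [← smul_sum, ← hU.sum_smul_apply_add]
    simp only [smul_sum]
    rw [sum_comm]
    exact sum_congr rfl fun a _ => sum_congr rfl fun j _ => by rw [smul_comm, add_comm (j : ℕ)]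
  rw [hmain, map_sum, ← sum_sub_distrib]
  refine sum_mem fun a _ => ?_
  rw [map_smul, ← smul_sub, sum_smul_apply_apply, add_sub_cancel_left]
  exact h.top.ideal_mono (by linarith) (h.smul_mem (he a) (hU.error_mem hcrude a))

theorem exists_mul_upperToeplitz_sub_diagonal_mem (hU : IsApproxScaffold h U ρ val d)
    (hw : IsMinGap n d w) {e : Fin n → K} (he : ∀ a : Fin n, e a ∈ h.base.ideal (-d a))
    (hgen : IsOrderGenerator h.top (Submodule.span K (Set.range fun j : Fin n => U j))
      (∑ a, e a • U a ρ)) {π : K} (hπ : HasVal vK π 1) :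
    ∃ C : Matrix (Fin n) (Fin n) K, (∀ k j : Fin n, C k j ∈ h.base.ideal (-w j)) ∧
      ∀ k l : Fin n, (C * upperToeplitz e - Matrix.diagonal fun k : Fin n => π ^ (-d k)) k l ∈
        h.base.ideal (1 - d l) := by
  have hrow (k : Fin n) : ∃ c : Fin n → K, (∀ j : Fin n, c j ∈ h.base.ideal (-w j)) ∧
      (∑ j : Fin n, c j • U j) (∑ a, e a • U a ρ) = π ^ (-d k) • U k ρ := by
    have hk : π ^ (-d k) • U k ρ ∈ h.top.ideal 0 := by
      simpa using (hU.smul_apply_mem_iff (k := 0) k).2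
        (by simpa using (hπ.zpow h.base (-d k)).mem h.base)
    obtain ⟨α, hα, hαν⟩ := (hgen _).1 hk
    obtain ⟨c, hc, rfl⟩ := (hU.mem_associatedOrder_iff hw).1 hα
    exact ⟨c, hc, hαν⟩
  choose C hC hCν using hrow
  refine ⟨Matrix.of C, hC, fun k l => ?_⟩
  have hmem := neg_mem (hU.sum_vecMul_upperToeplitz_sub_mem hw (hC k) he)
  have hsingle : π ^ (-d k) • U k ρ =
      ∑ l : Fin n, Matrix.diagonal (fun k : Fin n => π ^ (-d k)) k l • U l ρ := by
    simp [Matrix.diagonal_apply]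
  rw [hCν, neg_sub, hsingle, ← sum_sub_distrib, ← mul_one (n : ℤ)] at hmem
  simp only [← sub_smul] at hmem
  exact hU.sum_smul_apply_mem_iff.1 hmem l

theorem eq_sub_of_isOrderGenerator (hU : IsApproxScaffold h U ρ val d) (hw : IsMinGap n d w)
    {ν : L} (hν : ν ∈ h.top.ideal 0)
    (hgen : IsOrderGenerator h.top (Submodule.span K (Set.range fun j : Fin n => U j)) ν) :
    ∀ j < n, w j = d j - d 0 := by
  obtain ⟨π, hπ⟩ := h.base.exists_hasVal 1
  obtain ⟨e, he, rfl⟩ := hU.exists_sum_smul_apply_eq hν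
  obtain ⟨C, hC, hCe⟩ := hU.exists_mul_upperToeplitz_sub_diagonal_mem hw he hgen hπ
  have htoeplitz (j l : Fin n) : upperToeplitz e j l ∈ h.base.ideal (w j - d l) := by
    rw [upperToeplitz, Matrix.of_apply]
    split_ifs with hjl
    · have hval := Fin.sub_val_of_le hjl
      have hgap := hw.le_sub (j := j) (a := (l - j : Fin n)) (by omega)
      rw [hval, Nat.add_sub_cancel' (Fin.le_def.1 hjl), ← hval] at hgap
      exact h.base.ideal_mono (by omega) (he (l - j))
    · exact zero_mem _
  have hdiag (j : Fin n) : HasVal vK (upperToeplitz e j j) (w j - d j) :=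
    h.base.hasVal_diag_of_mul_sub_diagonal_mem hπ (s := fun j : Fin n => d j)
      (t := fun j : Fin n => w j) hC htoeplitz (fun _ _ hlj => if_neg (not_le.2 hlj)) hCe j
  intro j hj
  have : NeZero n := ⟨h.pos.ne'⟩
  have hzero := hdiag 0
  have hdj := hdiag ⟨j, hj⟩
  simp only [upperToeplitz, Matrix.of_apply, le_refl, if_true, sub_self, Fin.val_zero] at hzero hdj
  have hvals := hzero.2.symm.trans hdj.2
  have hw0 := hw.apply_zero h.pos
  omega

theorem exists_isOrderGenerator_iff (hU : IsApproxScaffold h U ρ val d) (hw : IsMinGap n d w) :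
    (∃ ν ∈ h.top.ideal 0,
      IsOrderGenerator h.top (Submodule.span K (Set.range fun j : Fin n => U j)) ν) ↔
        ∀ j < n, w j = d j - d 0 := by
  refine ⟨fun ⟨ν, hν, hgen⟩ => hU.eq_sub_of_isOrderGenerator hw hν hgen, fun hwd => ?_⟩
  obtain ⟨c, hc⟩ := h.base.exists_hasVal (-d 0)
  have hcρ : c • U 0 ρ ∈ h.top.ideal (n * 0) :=
    (hU.smul_apply_mem_iff ⟨0, h.pos⟩).2 (by simpa using hc.mem h.base)
  exact ⟨c • ρ, by simpa [hU.zero] using hcρ, hU.isOrderGenerator_smul hw hwd hc⟩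

end IsApproxScaffold

end ApproxScaffold

section DigitOperators

variable {K L : Type*} [Field K] [Field L] [Algebra K L] {vL : L → ℤ} {hv : IsDiscVal vL} {p : ℕ}
  {N B b : ℤ}

namespace IsDiscVal

theorem natCast_mem_shift {k : ℕ} (hk : (k : L) ∈ hv.ideal N) :
    (k : Module.End K L) ∈ hv.shift K N := fun M z hz => by
  rw [Module.End.natCast_apply, nsmul_eq_mul, add_comm]
  exact hv.mul_mem hk hz

theorem exists_one_add_pow_prime_eq (hp : p.Prime) {g : Module.End K L} (hN : 0 ≤ N)
    (hg : g ∈ hv.shift K N) : ∃ r ∈ hv.shift K N, (1 + g) ^ p = 1 + g ^ p + p * r := by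
  have hone : (1 : Module.End K L) ∈ hv.shift K 0 := fun M z hz => by simpa using hz
  have hexpand := (Commute.one_left g).add_pow_prime_eq hp
  rw [one_pow, mul_one, mul_assoc] at hexpand
  refine ⟨_, ?_, hexpand⟩
  refine shift_mono (le_of_eq (add_zero N).symm) (shift_mul hg (sum_mem fun k _ => ?_))
  refine shift_mono ?_ (shift_mul (shift_mul (shift_pow hone (k - 1)) (shift_pow hg (p - k - 1)))
    (natCast_mem_shift (hv.natCast_mem (p.choose k / p))))
  have : 0 ≤ ((p - k - 1 : ℕ) : ℤ) * N := by positivity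
  omega

end IsDiscVal

/-- The operator `D ^ s * M ^ t` indexed by the two-digit number `t + p * s` in base `p`, and `0`
for indices with more than two digits. -/
def digitOp (p : ℕ) (D M : Module.End K L) (a : ℕ) : Module.End K L :=
  if a < p ^ 2 then D ^ (a / p) * M ^ (a % p) else 0

variable {D M : Module.End K L}

theorem digitOp_add_mul {s t : ℕ} (hs : s < p) (ht : t < p) :
    digitOp p D M (t + p * s) = D ^ s * M ^ t := by
  rw [digitOp, if_pos (by nlinarith), Nat.add_mul_div_left _ _ (by omega), Nat.div_eq_of_lt ht,
    zero_add, Nat.add_mul_mod_self_left, Nat.mod_eq_of_lt ht]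

theorem digitOp_eq_zero {a : ℕ} (ha : p ^ 2 ≤ a) : digitOp p D M a = 0 :=
  if_neg ha.not_gt

theorem pow_mul_pow_sub_digitOp_mem_shift_of_lt (hD : D ∈ hv.shift K B) (hM : M ∈ hv.shift K b)
    (hDp : D ^ p ∈ hv.shift K ((p + 1) * B)) (s : ℕ) {t : ℕ} (ht : t < p) :
    D ^ s * M ^ t - digitOp p D M (t + p * s) ∈ hv.shift K (s * B + t * b + B) := by
  rcases lt_or_ge s p with hs | hs
  · rw [digitOp_add_mul hs ht, sub_self]
    exact zero_mem _
  · obtain ⟨s, rfl⟩ := Nat.exists_eq_add_of_le hs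
    rw [digitOp_eq_zero (by nlinarith), sub_zero, pow_add, mul_assoc]
    exact IsDiscVal.shift_mono (le_of_eq (by push_cast; ring)) (IsDiscVal.shift_mul hDp
      (IsDiscVal.shift_mul (IsDiscVal.shift_pow hD s) (IsDiscVal.shift_pow hM t)))

theorem pow_mul_pow_sub_digitOp_mem_shift (hDM : Commute D M) (hD : D ∈ hv.shift K B)
    (hM : M ∈ hv.shift K b) (hDp : D ^ p ∈ hv.shift K ((p + 1) * B))
    (hMp : M ^ p - D ∈ hv.shift K (p * b + B)) (hbB : p * b ≤ B) (s : ℕ) {t : ℕ}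
    (ht : t < 2 * p) :
    D ^ s * M ^ t - digitOp p D M (t + p * s) ∈ hv.shift K (s * B + t * b + B) := by
  rcases lt_or_ge t p with htp | htp
  · exact pow_mul_pow_sub_digitOp_mem_shift_of_lt hD hM hDp s htp
  obtain ⟨t, rfl⟩ := Nat.exists_eq_add_of_le htp
  have hcarry : D ^ s * M ^ (p + t) - digitOp p D M (p + t + p * s) =
      D ^ s * M ^ t * (M ^ p - D) +
      (D ^ (s + 1) * M ^ t - digitOp p D M (t + p * (s + 1))) := by
    rw [show p + t + p * s = t + p * (s + 1) by ring, mul_sub, mul_assoc, mul_assoc,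
      (hDM.pow_right t).eq.symm, ← mul_assoc _ D, ← pow_succ, ← pow_add, add_comm t p]
    abel
  rw [hcarry]
  refine add_mem (IsDiscVal.shift_mono (le_of_eq ?_) (IsDiscVal.shift_mul
    (IsDiscVal.shift_mul (IsDiscVal.shift_pow hD s) (IsDiscVal.shift_pow hM t)) hMp))
    (IsDiscVal.shift_mono ?_
      (pow_mul_pow_sub_digitOp_mem_shift_of_lt hD hM hDp (s + 1) (t := t) (by omega)))
  · push_cast
    ring
  · push_cast
    linarith

theorem digitOp_mul_sub_mem_shift (hp : 0 < p) (hDM : Commute D M) (hD : D ∈ hv.shift K B)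
    (hM : M ∈ hv.shift K b) (hDp : D ^ p ∈ hv.shift K ((p + 1) * B))
    (hMp : M ^ p - D ∈ hv.shift K (p * b + B)) (hbB : p * b ≤ B) {j a : ℕ} (hj : j < p ^ 2)
    (ha : a < p ^ 2) :
    digitOp p D M j * digitOp p D M a - digitOp p D M (j + a) ∈
      hv.shift K (((j / p : ℕ) + (a / p : ℕ)) * B + ((j % p : ℕ) + (a % p : ℕ)) * b + B) := by
  have hmul : digitOp p D M j * digitOp p D M a =
      D ^ (j / p + a / p) * M ^ (j % p + a % p) := by
    rw [digitOp, digitOp, if_pos hj, if_pos ha, pow_add, pow_add]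
    exact (hDM.symm.pow_pow _ _).mul_mul_mul_comm _ _
  have hadd : j + a = j % p + a % p + p * (j / p + a / p) := by
    have := Nat.mod_add_div j p
    have := Nat.mod_add_div a p
    rw [mul_add]
    omega
  have hjp := Nat.mod_lt j hp
  have hap := Nat.mod_lt a hp
  rw [hmul, hadd]
  exact_mod_cast pow_mul_pow_sub_digitOp_mem_shift hDM hD hM hDp hMp hbB (j / p + a / p)
    (by omega : j % p + a % p < 2 * p)

theorem digits_eq_of_sq_dvd (hp : p.Prime) (hpb : ¬ (p : ℤ) ∣ b) {i j k l : ℕ} (hi : i < p)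
    (hj : j < p) (hk : k < p) (hl : l < p)
    (hdvd : (p : ℤ) ^ 2 ∣ ((i + p * j : ℤ) - (k + p * l)) * b) : i = k ∧ j = l := by
  have hdvd' := (((Nat.prime_iff_prime_int.1 hp).coprime_iff_not_dvd.2
    hpb).pow_left (m := 2)).dvd_of_dvd_mul_right hdvd
  have hmod : i + p * j ≡ k + p * l [MOD p ^ 2] :=
    (Nat.modEq_iff_dvd.2 (by exact_mod_cast hdvd')).symm
  have heq := hmod.eq_of_lt_of_lt (by nlinarith) (by nlinarith)
  have hik : i = k := by
    simpa [Nat.add_mul_mod_self_left, Nat.mod_eq_of_lt hi, Nat.mod_eq_of_lt hk]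
      using congrArg (· % p) heq
  exact ⟨hik, Nat.eq_of_mul_eq_mul_left hp.pos (by omega)⟩

end DigitOperators

section WittCarry

variable {K : Type*} [Field K] {v : K → ℤ} {p : ℕ}

/-- The polynomial `D(X, Y) = (X ^ p + Y ^ p - (X + Y) ^ p) / p`, the carry in the addition of Witt
vectors of length two. -/
def wittCarry (p : ℕ) (x y : K) : K :=
  (x ^ p + y ^ p - (x + y) ^ p) / p

theorem mul_wittCarry (hp : (p : K) ≠ 0) (x y : K) :
    p * wittCarry p x y = x ^ p + y ^ p - (x + y) ^ p :=
  mul_div_cancel₀ _ hp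

theorem map_wittCarry {L F : Type*} [Field L] [FunLike F K L] [RingHomClass F K L] (f : F)
    (x y : K) : f (wittCarry p x y) = wittCarry p (f x) (f y) := by
  simp only [wittCarry, map_div₀, map_sub, map_add, map_pow, map_natCast]

theorem IsDiscVal.wittCarry_mem (hv : IsDiscVal v) (hp : p.Prime) (hp0 : (p : K) ≠ 0) {x y : K}
    {a b N : ℤ} (hx : x ∈ hv.ideal a) (hy : y ∈ hv.ideal b) (ha : N ≤ (p - 1) * a + b)
    (hb : N ≤ a + (p - 1) * b) : wittCarry p x y ∈ hv.ideal N := by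
  obtain ⟨r, hr, hpow⟩ := hv.exists_add_pow_prime_eq hp hx hy ha hb
  have hcarry : wittCarry p x y = -r :=
    mul_left_cancel₀ hp0 (by linear_combination mul_wittCarry hp0 x y - hpow)
  exact hcarry ▸ neg_mem hr

end WittCarry

theorem pow_apply_sub {K L : Type*} [Field K] [Field L] [Algebra K L] (σ : L ≃ₐ[K] L) (y : L)
    (k : ℕ) : (σ ^ k) y - y = ∑ i ∈ range k, (σ ^ i) (σ y - y) := by
  simp_rw [map_sub, ← AlgEquiv.mul_apply, ← pow_succ]
  exact (sum_range_sub (fun i => (σ ^ i) y) k).symm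

/-- A totally ramified extension `L / K` of degree `p ^ 2` generated by solutions of the
near-Witt-vector equations `x₁ ^ p - x₁ = a₁` and `x₂ ^ p - x₂ = μ ^ p * a₁ + D(x₁, a₁)`, together
with an automorphism `σ` acting on `(x₁, x₂)` approximately as addition of the Witt vector
`(1, 0)`. The integers `b₁ < b₂` are its ramification numbers, `e` is the absolute ramification
index of `K`, and `lt_e` is the hypothesis under which the scaffold of `L / K` determines the
associated order. -/
structure WittTower {K L : Type*} [Field K] [Field L] [Algebra K L] (p : ℕ) (vK : K → ℤ)
    (vL : L → ℤ) extends IsTotallyRamified (p ^ 2) vK vL where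
  (e m b₁ b₂ : ℤ)
  (a₁ μ : K)
  (x₁ x₂ : L)
  σ : L ≃ₐ[K] L
  prime : p.Prime
  hasVal_p : HasVal vK (p : K) e
  hasVal_a₁ : HasVal vK a₁ (-b₁)
  hasVal_μ : HasVal vK μ (-m)
  not_dvd_b₁ : ¬ (p : ℤ) ∣ b₁
  b₁_pos : 0 < b₁
  m_pos : 0 < m
  lt_m : ((p : ℤ) ^ 2 - 1) * b₁ < (p : ℤ) ^ 2 * m
  b₂_eq : b₂ = (p : ℤ) ^ 2 * m + b₁
  lt_e : (p + 1) * b₂ - (p - 1) * b₁ < (p : ℤ) ^ 2 * e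
  x₁_eq : x₁ ^ p - x₁ = algebraMap K L a₁
  x₂_eq : x₂ ^ p - x₂ = algebraMap K L (μ ^ p * a₁) + wittCarry p x₁ (algebraMap K L a₁)
  apply_x₁_sub_mem : σ x₁ - (x₁ + 1) ∈ top.ideal ((p : ℤ) ^ 2 * e - p * (p - 1) * b₁)
  apply_x₂_sub_mem : σ x₂ - (x₂ + wittCarry p x₁ 1) ∈ top.ideal 1

namespace WittTower

variable {K L : Type*} [Field K] [Field L] [Algebra K L] {p : ℕ} {vK : K → ℤ} {vL : L → ℤ}
  (T : WittTower p vK vL)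

section Arithmetic

theorem two_le (T : WittTower p vK vL) : (2 : ℤ) ≤ p := by
  exact_mod_cast T.prime.two_le

theorem mul_b₁_pos : 0 < p * T.b₁ :=
  mul_pos (by linarith [T.two_le]) T.b₁_pos

theorem sq_mul_b₁_lt_b₂ : (p : ℤ) ^ 2 * T.b₁ < T.b₂ := by
  linarith [T.lt_m, T.b₂_eq]

theorem b₂_pos : 0 < T.b₂ :=
  (mul_pos (pow_pos (by linarith [T.two_le]) 2) T.b₁_pos).trans T.sq_mul_b₁_lt_b₂

theorem mul_b₁_le_b₂ : p * (p * T.b₁) ≤ T.b₂ := by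
  linarith [T.sq_mul_b₁_lt_b₂]

theorem mul_b₂_add_mul_b₁_lt : (p : ℤ) * T.b₂ + p * T.b₁ < (p : ℤ) ^ 2 * T.e := by
  nlinarith [T.lt_e, T.sq_mul_b₁_lt_b₂, T.b₁_pos, mul_nonneg T.b₁_pos.le (sq_nonneg (p - 1 : ℤ))]

theorem two_mul_b₂_lt : 2 * T.b₂ < (p : ℤ) ^ 2 * T.e := by
  nlinarith [T.mul_b₂_add_mul_b₁_lt, T.mul_b₁_pos, T.b₂_pos, T.two_le]

theorem mul_sub_one_mul_b₁_nonneg : 0 ≤ p * (p - 1) * T.b₁ :=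
  mul_nonneg (mul_nonneg p.cast_nonneg (by linarith [T.two_le])) T.b₁_pos.le

theorem mul_b₁_le_mul_sub_one_mul_b₁ : p * T.b₁ ≤ p * (p - 1) * T.b₁ := by
  nlinarith [T.mul_b₁_pos, T.two_le]

theorem mul_sub_one_mul_b₁_lt :
    p * (p - 1) * T.b₁ < (p : ℤ) ^ 2 * T.e - p * (p - 1) * T.b₁ := by
  linarith [T.two_mul_b₂_lt, T.mul_b₁_le_b₂, T.mul_b₁_pos]

theorem sq_mul_m_pos : 0 < (p : ℤ) ^ 2 * T.m :=
  mul_pos (pow_pos (by linarith [T.two_le]) 2) T.m_pos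

theorem hasVal_p_top : HasVal vL (p : L) ((p : ℤ) ^ 2 * T.e) := by
  simpa using T.hasVal_algebraMap T.hasVal_p

theorem p_mem : (p : L) ∈ T.top.ideal 1 :=
  T.top.ideal_mono (by linarith [T.two_mul_b₂_lt, T.b₂_pos]) (T.hasVal_p_top.mem T.top)

theorem p_ne_zero (T : WittTower p vK vL) : (p : L) ≠ 0 :=
  T.hasVal_p_top.1

end Arithmetic

section Generators

theorem hasVal_x₁ : HasVal vL T.x₁ (-(p * T.b₁)) := by
  refine T.top.hasVal_of_pow_sub_self_eq T.prime T.mul_b₁_pos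
    ((T.hasVal_algebraMap T.hasVal_a₁).congr ?_) T.x₁_eq
  push_cast
  ring

theorem carry_mem : wittCarry p T.x₁ (algebraMap K L T.a₁) ∈
    T.top.ideal (-(p * T.b₁) - (p - 1) * p ^ 2 * T.b₁) := by
  have hp := T.two_le
  have hle : 0 ≤ (p : ℤ) * (p - 1) * ((p - 2) * T.b₁) :=
    mul_nonneg (mul_nonneg (by linarith) (by linarith))
      (mul_nonneg (by linarith) T.b₁_pos.le)
  refine T.top.wittCarry_mem T.prime T.p_ne_zero (T.hasVal_x₁.mem T.top)
    ((T.hasVal_algebraMap T.hasVal_a₁).mem T.top) ?_ ?_ <;>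
  · push_cast
    linarith

theorem carry_mem_of_lt : wittCarry p T.x₁ (algebraMap K L T.a₁) ∈
    T.top.ideal (-(p * T.b₂) + 1) := by
  refine T.top.ideal_mono ?_ T.carry_mem
  linarith [mul_lt_mul_of_pos_left T.sq_mul_b₁_lt_b₂ (by linarith [T.two_le] : (0 : ℤ) < p),
    T.mul_sub_one_mul_b₁_nonneg]

theorem hasVal_x₂ : HasVal vL T.x₂ (-(p ^ 2 * T.m + p * T.b₁)) := by
  have hlead := T.hasVal_algebraMap ((T.hasVal_μ.pow T.base p).mul T.hasVal_a₁ T.base)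
  refine T.top.hasVal_of_pow_sub_self_eq T.prime (by linarith [T.sq_mul_m_pos, T.mul_b₁_pos])
    ((hlead.add_of_mem T.top T.carry_mem_of_lt ?_).congr ?_) T.x₂_eq
  · push_cast
    rw [T.b₂_eq]
    linarith [T.mul_sub_one_mul_b₁_nonneg]
  · push_cast
    ring

theorem hasVal_μ_mul_x₁ :
    HasVal vL (algebraMap K L T.μ * T.x₁) (-(p ^ 2 * T.m + p * T.b₁)) :=
  ((T.hasVal_algebraMap T.hasVal_μ).mul T.hasVal_x₁ T.top).congr (by push_cast; ring)

/-- The generator `x₂ - μ * x₁`. The leading terms of `x₂` and `μ * x₁` cancel, so that its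
valuation `-b₂` is prime to `p`. -/
def X : L :=
  T.x₂ - algebraMap K L T.μ * T.x₁

theorem hasVal_X : HasVal vL T.X (-T.b₂) := by
  have hX : T.X ∈ T.top.ideal (-(p ^ 2 * T.m + p * T.b₁)) :=
    sub_mem (T.hasVal_x₂.mem T.top) (T.hasVal_μ_mul_x₁.mem T.top)
  obtain ⟨r, hr, hpow⟩ := T.top.exists_add_pow_prime_eq T.prime hX
    (T.hasVal_μ_mul_x₁.mem T.top) (N := -(p * (p ^ 2 * T.m + p * T.b₁)))
    (by linarith) (by linarith)
  have hlead : HasVal vL (-(algebraMap K L (T.μ ^ p) * T.x₁)) (-(p * T.b₂)) :=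
    (((T.hasVal_algebraMap (T.hasVal_μ.pow T.base p)).mul T.hasVal_x₁ T.top).neg T.top).congr
      (by rw [T.b₂_eq]; push_cast; ring)
  have hμx₁ : algebraMap K L T.μ * T.x₁ ∈ T.top.ideal (-(p * T.b₂) + 1) := by
    refine T.top.ideal_mono ?_ (T.hasVal_μ_mul_x₁.mem T.top)
    rw [T.b₂_eq]
    nlinarith [T.sq_mul_m_pos, T.two_le]
  have hpr : p * r ∈ T.top.ideal (-(p * T.b₂) + 1) := by
    refine T.top.ideal_mono ?_ (T.top.mul_mem (T.hasVal_p_top.mem T.top) hr)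
    rw [T.b₂_eq]
    linarith [T.two_mul_b₂_lt, T.sq_mul_b₁_lt_b₂, T.b₂_pos, T.mul_b₁_pos]
  refine T.top.hasVal_of_pow_sub_self_eq T.prime T.b₂_pos (hlead.add_of_mem T.top
    (add_mem T.carry_mem_of_lt (sub_mem hμx₁ hpr)) (lt_add_one _)) ?_
  have hx₂ := T.x₂_eq
  rw [show T.x₂ = T.X + algebraMap K L T.μ * T.x₁ by rw [X]; ring, hpow, map_mul, map_pow] at hx₂
  rw [map_pow]
  linear_combination hx₂ - algebraMap K L T.μ ^ p * T.x₁_eq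

end Generators

section Galois

theorem apply_x₁_sub_mem_one : T.σ T.x₁ - (T.x₁ + 1) ∈ T.top.ideal 1 :=
  T.top.ideal_mono (by linarith [T.mul_sub_one_mul_b₁_nonneg, T.mul_sub_one_mul_b₁_lt])
    T.apply_x₁_sub_mem

theorem hasVal_apply_x₁_sub : HasVal vL (T.σ T.x₁ - T.x₁) 0 := by
  have h := (HasVal.one T.top).add_of_mem T.top T.apply_x₁_sub_mem_one one_pos
  rwa [show 1 + (T.σ T.x₁ - (T.x₁ + 1)) = T.σ T.x₁ - T.x₁ by ring] at h

theorem le_errorVal :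
    T.b₂ + p * T.b₁ + 1 ≤ (p : ℤ) ^ 2 * T.e - (p - 1) * (p ^ 2 * T.m + p * T.b₁) := by
  have hb₂ : (p - 1 : ℤ) * T.b₂ = (p - 1) * (p ^ 2 * T.m + T.b₁) := by rw [T.b₂_eq]
  linarith [T.lt_e, T.sq_mul_b₁_lt_b₂]

theorem exists_apply_X_add : ∃ g ∈ T.top.ideal (-(p * (p - 1) * T.b₁)),
    T.σ (T.X + algebraMap K L T.μ) = T.X + g := by
  have hcarry : wittCarry p T.x₁ 1 ∈ T.top.ideal (-(p * (p - 1) * T.b₁)) :=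
    T.top.wittCarry_mem T.prime T.p_ne_zero (T.hasVal_x₁.mem T.top) T.top.one_mem (by linarith)
      (by linarith [T.mul_b₁_le_mul_sub_one_mul_b₁])
  have hμ := T.top.mul_mem ((T.hasVal_algebraMap T.hasVal_μ).mem T.top) T.apply_x₁_sub_mem
  refine ⟨wittCarry p T.x₁ 1 + (T.σ T.x₂ - (T.x₂ + wittCarry p T.x₁ 1)) -
    algebraMap K L T.μ * (T.σ T.x₁ - (T.x₁ + 1)),
    sub_mem (add_mem hcarry (T.top.ideal_mono ?_ T.apply_x₂_sub_mem)) (T.top.ideal_mono ?_ hμ), ?_⟩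
  · linarith [T.mul_sub_one_mul_b₁_nonneg]
  · push_cast
    linarith [T.two_mul_b₂_lt, T.b₂_eq, T.b₂_pos, T.mul_b₁_pos, T.b₁_pos]
  · rw [X, map_add, map_sub, map_mul, AlgEquiv.commutes]
    ring

theorem pow_apply_x₁ : (T.σ ^ p) T.x₁ = T.x₁ := by
  have hmem : (T.σ ^ p) T.x₁ - T.x₁ ∈ T.top.ideal 1 := by
    have hstep : ∀ i, (T.σ ^ i) (T.σ T.x₁ - T.x₁) =
        1 + (T.σ ^ i) (T.σ T.x₁ - (T.x₁ + 1)) := fun i => by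
      rw [← map_one (T.σ ^ i), ← map_add]
      congr 1
      rw [map_one]
      ring
    simp only [pow_apply_sub, hstep, sum_add_distrib, sum_const, card_range, nsmul_eq_mul, mul_one]
    exact add_mem T.p_mem (sum_mem fun i _ => T.map_mem _ T.apply_x₁_sub_mem_one)
  refine sub_eq_zero.1 (T.top.eq_zero_of_add_pow_sub_eq T.prime (T.hasVal_p_top.mem T.top)
    T.mul_b₁_pos.le ?_ (T.hasVal_x₁.mem T.top) hmem ?_)
  · linarith [T.mul_sub_one_mul_b₁_nonneg, T.mul_sub_one_mul_b₁_lt]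
  · rw [add_sub_cancel, ← map_pow, ← map_sub, T.x₁_eq, AlgEquiv.commutes]

/-- `x₂ + x₁ ^ p / p` is a ghost component of the Witt vector `(x₁, x₂)`; up to an integral error,
`σ` translates it by the ghost component `1 / p` of `(1, 0)`. -/
theorem exists_apply_x₂_sub_eq : ∃ s ∈ T.top.ideal 1,
    T.σ T.x₂ - T.x₂ = 1 / p + s - (T.σ (T.x₁ ^ p / p) - T.x₁ ^ p / p) := by
  set ε := T.σ T.x₁ - (T.x₁ + 1) with hε
  have hx : T.x₁ + 1 ∈ T.top.ideal (-(p * T.b₁)) :=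
    add_mem (T.hasVal_x₁.mem T.top) (T.top.ideal_mono (by linarith [T.mul_b₁_pos]) T.top.one_mem)
  have hcarry : wittCarry p (T.x₁ + 1) ε ∈ T.top.ideal 1 := by
    refine T.top.wittCarry_mem T.prime T.p_ne_zero hx T.apply_x₁_sub_mem ?_ ?_
    · linarith [T.mul_sub_one_mul_b₁_lt]
    · nlinarith [T.mul_sub_one_mul_b₁_lt, T.mul_b₁_le_mul_sub_one_mul_b₁, T.mul_b₁_pos, T.two_le]
  have hpow : ε ^ p / p ∈ T.top.ideal 1 := by
    rw [div_eq_mul_inv]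
    refine T.top.ideal_mono ?_ (T.top.mul_mem (T.top.pow_mem T.apply_x₁_sub_mem p)
      ((T.hasVal_p_top.inv T.top).mem T.top))
    nlinarith [T.mul_sub_one_mul_b₁_lt, T.mul_sub_one_mul_b₁_nonneg, T.two_le]
  refine ⟨ε ^ p / p - wittCarry p (T.x₁ + 1) ε + (T.σ T.x₂ - (T.x₂ + wittCarry p T.x₁ 1)),
    add_mem (sub_mem hpow hcarry) T.apply_x₂_sub_mem, ?_⟩
  rw [map_div₀, map_pow, map_natCast, show T.σ T.x₁ = T.x₁ + 1 + ε by rw [hε]; ring, wittCarry,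
    wittCarry]
  field_simp [T.p_ne_zero]
  ring

theorem pow_apply_x₂_sub_mem_one : (T.σ ^ p) T.x₂ - T.x₂ - 1 ∈ T.top.ideal 1 := by
  obtain ⟨s, hs, hσ⟩ := T.exists_apply_x₂_sub_eq
  have hp0 := T.p_ne_zero
  have hsum : (T.σ ^ p) T.x₂ - T.x₂ - 1 = ∑ i ∈ range p, (T.σ ^ i) s := by
    have hghost := pow_apply_sub T.σ (T.x₁ ^ p / p) p
    rw [map_div₀, map_pow, T.pow_apply_x₁, map_natCast, sub_self] at hghost
    simp only [pow_apply_sub, hσ, map_sub _ (_ + _), map_add, sum_sub_distrib, sum_add_distrib]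
    rw [← hghost]
    simp [hp0]
  rw [hsum]
  exact sum_mem fun i _ => T.map_mem _ hs

theorem pow_apply_x₂_sub_mem : (T.σ ^ p) T.x₂ - T.x₂ - 1 ∈
    T.top.ideal ((p : ℤ) ^ 2 * T.e - (p - 1) * (p ^ 2 * T.m + p * T.b₁)) := by
  refine T.top.mem_of_add_one_add_pow_sub_eq T.prime (T.hasVal_p_top.mem T.top)
    (by linarith [T.sq_mul_m_pos, T.mul_b₁_pos]) (T.hasVal_x₂.mem T.top)
    T.pow_apply_x₂_sub_mem_one ?_
  rw [show T.x₂ + (1 + ((T.σ ^ p) T.x₂ - T.x₂ - 1)) = (T.σ ^ p) T.x₂ by ring, ← map_pow, ← map_sub,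
    T.x₂_eq, map_add, AlgEquiv.commutes, map_wittCarry, AlgEquiv.commutes, T.pow_apply_x₁]

theorem exists_pow_apply_X :
    ∃ t, t - 1 ∈ T.top.ideal (T.b₂ + p * T.b₁ + 1) ∧ (T.σ ^ p) T.X = T.X + t := by
  refine ⟨(T.σ ^ p) T.x₂ - T.x₂, T.top.ideal_mono T.le_errorVal T.pow_apply_x₂_sub_mem, ?_⟩
  rw [X, map_sub, map_mul, AlgEquiv.commutes, T.pow_apply_x₁]
  ring

end Galois

end WittTower

section GaloisOperators

variable {K L : Type*} [Field K] [Field L] [Algebra K L] {p : ℕ} {σ : L ≃ₐ[K] L}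

/-- The image of the group algebra `K[G]` in the endomorphisms of `L`, where `G` is the group of
automorphisms of `L / K`. -/
def galoisSpan (K L : Type*) [Field K] [Field L] [Algebra K L] : Submodule K (Module.End K L) :=
  Submodule.span K {f | ∃ τ : L ≃ₐ[K] L, f = (τ.toLinearMap : Module.End K L)}

/-- The operator `σ ^ p - 1`, denoted `Ψ₂` for a generator `σ` of the Galois group. -/
def diffOp (p : ℕ) (σ : L ≃ₐ[K] L) : Module.End K L :=
  (σ ^ p).toLinearMap - 1

theorem diffOp_apply (z : L) : diffOp p σ z = (σ ^ p) z - z :=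
  rfl

theorem diffOp_pow_mul_of_fixed {y : L} (hy : (σ ^ p) y = y) (z : L) (k : ℕ) :
    (diffOp p σ ^ k) (z * y) = (diffOp p σ ^ k) z * y := by
  induction k with
  | zero => simp
  | succ k ih =>
    rw [pow_succ', Module.End.mul_apply, ih, diffOp_apply, map_mul, hy, ← sub_mul, ← diffOp_apply,
      Module.End.mul_apply]

theorem one_add_diffOp (p : ℕ) (σ : L ≃ₐ[K] L) :
    1 + diffOp p σ = (σ.toLinearMap : Module.End K L) ^ p := by
  rw [diffOp, AlgEquiv.pow_toLinearMap, add_sub_cancel]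

theorem commute_toLinearMap_diffOp (p : ℕ) (σ : L ≃ₐ[K] L) :
    Commute (σ.toLinearMap : Module.End K L) (diffOp p σ) := by
  rw [diffOp, AlgEquiv.pow_toLinearMap]
  exact ((Commute.refl _).pow_right p).sub_right (Commute.one_right _)

variable [CharZero K] {μ : K}

/-- The truncated binomial series `(σ ^ p) ^ [μ]` for the power `(1 + Ψ₂) ^ μ`. -/
noncomputable def truncPow (p : ℕ) (σ : L ≃ₐ[K] L) (μ : K) : Module.End K L :=
  ∑ i ∈ range p, Ring.choose μ i • diffOp p σ ^ i

/-- The operator `σ (σ ^ p) ^ [μ] - 1`, denoted `Ψ₁` for a generator `σ` of the Galois group. -/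
noncomputable def mixedOp (p : ℕ) (σ : L ≃ₐ[K] L) (μ : K) : Module.End K L :=
  σ.toLinearMap * truncPow p σ μ - 1

theorem mixedOp_apply (z : L) : mixedOp p σ μ z = σ (truncPow p σ μ z) - z :=
  rfl

theorem truncPow_apply (z : L) :
    truncPow p σ μ z = ∑ i ∈ range p, Ring.choose μ i • (diffOp p σ ^ i) z := by
  simp [truncPow]

theorem truncPow_mul_of_fixed {y : L} (hy : (σ ^ p) y = y) (z : L) :
    truncPow p σ μ (z * y) = truncPow p σ μ z * y := by
  simp only [truncPow_apply, diffOp_pow_mul_of_fixed hy, sum_mul, smul_mul_assoc]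

theorem commute_truncPow {f : Module.End K L} (hf : Commute f (diffOp p σ)) (μ : K) :
    Commute f (truncPow p σ μ) :=
  Commute.sum_right _ _ _ fun i _ => (hf.pow_right i).smul_right _

theorem commute_diffOp_mixedOp (p : ℕ) (σ : L ≃ₐ[K] L) (μ : K) :
    Commute (diffOp p σ) (mixedOp p σ μ) :=
  ((commute_toLinearMap_diffOp p σ).symm.mul_right
    (commute_truncPow (Commute.refl _) μ)).sub_right (Commute.one_right _)

theorem one_add_mixedOp_pow (p : ℕ) (σ : L ≃ₐ[K] L) (μ : K) :
    (1 + mixedOp p σ μ) ^ p = (1 + diffOp p σ) * truncPow p σ μ ^ p := by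
  rw [mixedOp, add_sub_cancel, (commute_truncPow (commute_toLinearMap_diffOp p σ) μ).mul_pow,
    one_add_diffOp]

/-- The operators `Ψ^(a)` of the scaffold. -/
noncomputable def scaffoldOp (p : ℕ) (σ : L ≃ₐ[K] L) (μ : K) (a : ℕ) : Module.End K L :=
  digitOp p (diffOp p σ) (mixedOp p σ μ) a

theorem scaffoldOp_mem_span (p : ℕ) (σ : L ≃ₐ[K] L) (μ : K) (a : ℕ) :
    scaffoldOp p σ μ a ∈ galoisSpan K L := by
  set S := Algebra.adjoin K {(σ.toLinearMap : Module.End K L)} with hS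
  have hσ : (σ.toLinearMap : Module.End K L) ∈ S := Algebra.subset_adjoin rfl
  have hD : diffOp p σ ∈ S := by
    rw [diffOp, AlgEquiv.pow_toLinearMap]
    exact sub_mem (pow_mem hσ p) (one_mem _)
  have hM : mixedOp p σ μ ∈ S :=
    sub_mem (mul_mem hσ (sum_mem fun i _ => Subalgebra.smul_mem _ (pow_mem hD i) _)) (one_mem _)
  have hU : scaffoldOp p σ μ a ∈ S := by
    rw [scaffoldOp, digitOp]
    split_ifs
    · exact mul_mem (pow_mem hD _) (pow_mem hM _)
    · exact zero_mem _
  rw [hS, ← Subalgebra.mem_toSubmodule, Algebra.adjoin_eq_span] at hU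
  refine Submodule.span_mono (fun f hf => ?_) hU
  obtain ⟨k, rfl⟩ := Submonoid.mem_closure_singleton.1 hf
  exact ⟨σ ^ k, (AlgEquiv.pow_toLinearMap σ k).symm⟩

end GaloisOperators

namespace WittTower

variable {K L : Type*} [Field K] [Field L] [Algebra K L] [CharZero L] {p : ℕ} {vK : K → ℤ}
  {vL : L → ℤ} (T : WittTower p vK vL)

section ChooseBasis

theorem hasVal_choose_X {i : ℕ} (hi : i < p) : HasVal vL (Ring.choose T.X i) (-(i * T.b₂)) :=
  HasVal.choose T.top T.prime T.p_mem T.b₂_pos T.hasVal_X hi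

theorem hasVal_choose_x₁ {j : ℕ} (hj : j < p) :
    HasVal vL (Ring.choose T.x₁ j) (-(j * (p * T.b₁))) :=
  HasVal.choose T.top T.prime T.p_mem T.mul_b₁_pos T.hasVal_x₁ hj

/-- The elements `choose X i * choose x₁ j` for `i, j < p`. Since `σ` translates `x₁` by about `1`
and `X` by about `-μ`, and `σ ^ p` fixes `x₁` and translates `X` by about `1`, the scaffold
operators act on them by Pascal's rule up to small errors. -/
noncomputable def chooseBasis (i : Fin p × Fin p) : L :=
  Ring.choose T.X i.1 * Ring.choose T.x₁ i.2

/-- The valuation of `chooseBasis`. -/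
def chooseVal (i : Fin p × Fin p) : ℤ :=
  -((i.1 : ℕ) * T.b₂) + -((i.2 : ℕ) * (p * T.b₁))

theorem isValBasis : IsValBasis (p ^ 2) vL T.chooseBasis T.chooseVal where
  card_eq := by rw [Fintype.card_prod, Fintype.card_fin, sq]
  hasVal i := (T.hasVal_choose_X i.1.2).mul (T.hasVal_choose_x₁ i.2.2) T.top
  incongruent i j := by
    rintro ⟨c, hc⟩
    rw [chooseVal, chooseVal, T.b₂_eq] at hc
    push_cast at hc
    obtain ⟨h₁, h₂⟩ := digits_eq_of_sq_dvd T.prime T.not_dvd_b₁ i.1.2 i.2.2 j.1.2 j.2.2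
      ⟨-c - T.m * ((i.1 : ℕ) - (j.1 : ℕ)), by linear_combination -hc⟩
    exact Prod.ext (Fin.ext h₁) (Fin.ext h₂)

end ChooseBasis

section DiffOp

theorem pow_apply_choose_x₁ (j : ℕ) :
    (T.σ ^ p) (Ring.choose T.x₁ j) = Ring.choose T.x₁ j := by
  rw [Ring.map_choose, T.pow_apply_x₁]

theorem exists_diffOp_choose_X : ∃ t : L, t - 1 ∈ T.top.ideal (T.b₂ + p * T.b₁ + 1) ∧ ∀ i : ℕ,
    diffOp p T.σ (Ring.choose T.X i) = Ring.choose (T.X + t) i - Ring.choose T.X i := by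
  obtain ⟨t, ht, hX⟩ := T.exists_pow_apply_X
  exact ⟨t, ht, fun i => by rw [diffOp_apply, Ring.map_choose, hX]⟩

theorem diffOp_chooseBasis (i : Fin p × Fin p) : diffOp p T.σ (T.chooseBasis i) =
    diffOp p T.σ (Ring.choose T.X i.1) * Ring.choose T.x₁ i.2 := by
  have h := diffOp_pow_mul_of_fixed (T.pow_apply_choose_x₁ i.2) (Ring.choose T.X i.1) 1
  rwa [pow_one] at h

theorem hasVal_diffOp_chooseBasis {i : Fin p × Fin p} (hi : (i.1 : ℕ) ≠ 0) :
    HasVal vL (diffOp p T.σ (T.chooseBasis i)) (T.chooseVal i + T.b₂) := by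
  obtain ⟨t, ht, hX⟩ := T.exists_diffOp_choose_X
  have ht0 : HasVal vL t 0 := by
    simpa using (HasVal.one T.top).add_of_mem T.top ht (by linarith [T.b₂_pos, T.mul_b₁_pos])
  rw [diffOp_chooseBasis, hX]
  exact ((HasVal.choose_add_sub_choose T.top T.prime T.p_mem T.b₂_pos T.hasVal_X ht0 hi i.1.2).mul
    (T.hasVal_choose_x₁ i.2.2) T.top).congr (by rw [chooseVal]; ring)

theorem diffOp_mem_shift : diffOp p T.σ ∈ T.top.shift K T.b₂ := by
  refine T.mem_shift_of_isValBasis T.isValBasis fun i => ?_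
  by_cases hi : (i.1 : ℕ) = 0
  · refine Or.inl ?_
    rw [diffOp_chooseBasis, hi, Ring.choose_zero_right, diffOp_apply, map_one, sub_self, zero_mul]
  · exact (T.hasVal_diffOp_chooseBasis hi).mem T.top

theorem hasVal_diffOp {i : Fin p × Fin p} (hi : (i.1 : ℕ) ≠ 0) {z : L} {M : ℤ}
    (hz : HasVal vL z M) (hM : ((p ^ 2 : ℕ) : ℤ) ∣ M - T.chooseVal i) :
    HasVal vL (diffOp p T.σ z) (M + T.b₂) :=
  T.hasVal_apply_of_dvd T.diffOp_mem_shift (T.isValBasis.hasVal i)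
    (T.hasVal_diffOp_chooseBasis hi) hz hM

theorem diffOp_pow_choose_X_sub_mem {i : ℕ} (hi : i < p) (k : ℕ) :
    (diffOp p T.σ ^ k) (Ring.choose T.X i) - (if k ≤ i then Ring.choose T.X (i - k) else 0)
      ∈ T.top.ideal (T.b₂ + p * T.b₁ + 1 - (i - k) * T.b₂) := by
  obtain ⟨t, ht, hX⟩ := T.exists_diffOp_choose_X
  induction k with
  | zero => exact Or.inl (by simp)
  | succ k ih =>
    have hstep : diffOp p T.σ (if k ≤ i then Ring.choose T.X (i - k) else 0) -
        (if k + 1 ≤ i then Ring.choose T.X (i - (k + 1)) else 0)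
          ∈ T.top.ideal (T.b₂ + p * T.b₁ + 1 - (i - (k + 1 : ℕ)) * T.b₂) := by
      rcases lt_trichotomy k i with hk | rfl | hk
      · obtain ⟨l, rfl⟩ := Nat.exists_eq_add_of_lt hk
        rw [if_pos hk.le, if_pos (Nat.succ_le_of_lt hk), hX,
          show k + l + 1 - k = l + 1 by omega, show k + l + 1 - (k + 1) = l by omega]
        exact T.top.ideal_mono (le_of_eq (by push_cast; ring))
          (T.top.choose_add_sub_choose_sub_mem T.prime T.p_mem T.b₂_pos.le
            (by linarith [T.b₂_pos, T.mul_b₁_pos]) (T.hasVal_X.mem T.top) ht (by omega))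
      · exact Or.inl (by simp [diffOp_apply])
      · exact Or.inl (by rw [if_neg hk.not_ge, if_neg (by omega), map_zero, sub_zero])
    have himage := IsDiscVal.shift_apply T.diffOp_mem_shift ih
    rw [map_sub, ← Module.End.mul_apply, ← pow_succ'] at himage
    have hsum := add_mem (T.top.ideal_mono (le_of_eq (by push_cast; ring)) himage) hstep
    rwa [sub_add_sub_cancel] at hsum

end DiffOp

end WittTower

namespace WittTower

variable {K L : Type*} [Field K] [Field L] [Algebra K L] {p : ℕ}
  {vK : K → ℤ} {vL : L → ℤ} (T : WittTower p vK vL)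

section ScaffoldVal

/-- The valuation of `scaffoldOp p σ μ a ρ`, when `ρ` has valuation `b₂`. -/
def scaffoldVal (a : ℕ) : ℤ :=
  (1 + (a / p : ℕ)) * T.b₂ + (a % p : ℕ) * p * T.b₁

/-- Modulo `p ^ 2` the valuation of `Ψ₂ ^ s * Ψ₁ ^ t` on `ρ` is that of the basis element whose
two indices are the complementary digits of `s` and `t`. -/
theorem sq_dvd_sub_chooseVal {s t : ℕ} (hs : s < p) (ht : t < p) :
    ((p ^ 2 : ℕ) : ℤ) ∣ (1 + s) * T.b₂ + t * (p * T.b₁) -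
      T.chooseVal (⟨p - 1 - s, by omega⟩, ⟨p - 1 - t, by omega⟩) := by
  refine ⟨p * T.m + T.b₁, ?_⟩
  simp only [chooseVal]
  rw [Nat.sub_sub, Nat.sub_sub, Nat.cast_sub (by omega), Nat.cast_sub (by omega), T.b₂_eq]
  push_cast
  ring

theorem scaffoldVal_incongruent {a b : ℕ} (ha : a < p ^ 2) (hb : b < p ^ 2)
    (hab : ((p ^ 2 : ℕ) : ℤ) ∣ T.scaffoldVal a - T.scaffoldVal b) : a = b := by
  obtain ⟨c, hc⟩ := hab
  rw [scaffoldVal, scaffoldVal, T.b₂_eq] at hc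
  push_cast at hc
  have hp := T.prime.pos
  obtain ⟨hdiv, hmod⟩ := digits_eq_of_sq_dvd T.prime T.not_dvd_b₁
    (Nat.div_lt_of_lt_mul (by rwa [← sq]) : a / p < p) (Nat.mod_lt a hp)
    (Nat.div_lt_of_lt_mul (by rwa [← sq]) : b / p < p) (Nat.mod_lt b hp)
    ⟨c - T.m * ((a / p : ℕ) - (b / p : ℕ)), by push_cast; linear_combination hc⟩
  rw [← Nat.div_add_mod a p, ← Nat.div_add_mod b p, hdiv, hmod]

theorem exists_hasVal_smul {ρ₀ : L} {d : ℕ → ℤ} (hρ₀ : HasVal vL ρ₀ (T.b₂ % (p : ℤ) ^ 2))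
    (hd : ∀ a < p ^ 2, d a = T.scaffoldVal a / (p : ℤ) ^ 2) :
    ∃ c, HasVal vK c (d 0) ∧ HasVal vL (c • ρ₀) T.b₂ := by
  obtain ⟨c, hc⟩ := T.base.exists_hasVal (d 0)
  refine ⟨c, hc, (T.hasVal_smul hc hρ₀).congr ?_⟩
  rw [hd 0 T.pos]
  simp [scaffoldVal, Int.mul_ediv_add_emod]

end ScaffoldVal

theorem choose_μ_mem [CharZero K] {k : ℕ} (hk : k < p) :
    Ring.choose T.μ k ∈ T.base.ideal (-(k * T.m)) := by
  have he : 1 ≤ T.e :=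
    pos_of_mul_pos_right (by linarith [T.two_mul_b₂_lt, T.b₂_pos]) (sq_nonneg (p : ℤ))
  exact T.base.choose_mem T.prime (T.base.ideal_mono he (T.hasVal_p.mem T.base)) T.m_pos.le
    (T.hasVal_μ.mem T.base) hk

variable [CharZero L]

theorem diffOp_pow_prime_mem_shift [IsGalois K L] :
    diffOp p T.σ ^ p ∈ T.top.shift K ((p : ℤ) ^ 2 * T.e + T.b₂) := by
  obtain ⟨r, hr, hpow⟩ :=
    IsDiscVal.exists_one_add_pow_prime_eq T.prime T.b₂_pos.le T.diffOp_mem_shift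
  have horder : (T.σ.toLinearMap : Module.End K L) ^ p ^ 2 = 1 := by
    have := Module.finite_of_finrank_pos (T.finrank_eq ▸ T.pos)
    rw [← AlgEquiv.pow_toLinearMap, ← T.finrank_eq, ← IsGalois.card_aut_eq_finrank,
      pow_card_eq_one']
    rfl
  rw [one_add_diffOp, ← pow_mul, ← sq, horder, add_assoc, left_eq_add,
    add_eq_zero_iff_eq_neg] at hpow
  rw [hpow]
  exact neg_mem (IsDiscVal.shift_mul (IsDiscVal.natCast_mem_shift (T.hasVal_p_top.mem T.top)) hr)

variable [CharZero K]

section MixedOp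

theorem choose_X_add_μ {i : ℕ} (hi : i < p) : Ring.choose (T.X + algebraMap K L T.μ) i =
    ∑ k ∈ range p, Ring.choose T.μ k • (if k ≤ i then Ring.choose T.X (i - k) else 0) := by
  rw [add_comm, Ring.add_choose_eq i (Commute.all _ _), Nat.sum_antidiagonal_eq_sum_range_succ
    fun k l => Ring.choose (algebraMap K L T.μ) k * Ring.choose T.X l,
    ← sum_subset (range_subset_range.2 (by omega : i + 1 ≤ p))]
  · refine sum_congr rfl fun k hk => ?_
    rw [if_pos (by rw [mem_range] at hk; omega), Algebra.smul_def, Ring.map_choose]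
  · intro k _ hk
    rw [if_neg (by rw [mem_range] at hk; omega), smul_zero]

theorem truncPow_choose_X_sub_mem {i : ℕ} (hi : i < p) :
    truncPow p T.σ T.μ (Ring.choose T.X i) - Ring.choose (T.X + algebraMap K L T.μ) i
      ∈ T.top.ideal (p * T.b₁ + 1 - i * T.b₂) := by
  rw [truncPow_apply, T.choose_X_add_μ hi, ← sum_sub_distrib]
  refine sum_mem fun k hk => ?_
  rw [← smul_sub]
  refine T.top.ideal_mono ?_
    (T.smul_mem (T.choose_μ_mem (mem_range.1 hk)) (T.diffOp_pow_choose_X_sub_mem hi k))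
  have hkb₁ : 0 ≤ (k : ℤ) * T.b₁ := mul_nonneg (by positivity) T.b₁_pos.le
  have hkb₂ : (k : ℤ) * T.b₂ = k * (p ^ 2 * T.m + T.b₁) := by rw [T.b₂_eq]
  push_cast
  linarith [T.b₂_pos]

theorem apply_truncPow_choose_X_sub_mem {i : ℕ} (hi : i < p) :
    T.σ (truncPow p T.σ T.μ (Ring.choose T.X i)) - Ring.choose T.X i ∈
      T.top.ideal (p * T.b₁ + 1 - i * T.b₂) := by
  obtain ⟨g, hg, hX⟩ := T.exists_apply_X_add
  have hmap := T.map_mem T.σ (T.truncPow_choose_X_sub_mem hi)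
  rw [map_sub, Ring.map_choose T.σ (T.X + _), hX] at hmap
  have hsum := add_mem hmap (T.top.ideal_mono ?_ (T.top.choose_add_sub_choose_mem T.prime T.p_mem
    T.mul_sub_one_mul_b₁_nonneg ?_ (T.hasVal_X.mem T.top) hg hi))
  · rwa [sub_add_sub_cancel] at hsum
  · linarith [T.sq_mul_b₁_lt_b₂]
  · linarith [T.sq_mul_b₁_lt_b₂, T.mul_b₁_pos]

theorem mixedOp_chooseBasis (i : Fin p × Fin p) : mixedOp p T.σ T.μ (T.chooseBasis i) =
    Ring.choose T.X i.1 * (Ring.choose (T.σ T.x₁) i.2 - Ring.choose T.x₁ i.2) +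
      (T.σ (truncPow p T.σ T.μ (Ring.choose T.X i.1)) - Ring.choose T.X i.1) *
        Ring.choose (T.σ T.x₁) i.2 := by
  rw [mixedOp_apply, chooseBasis, truncPow_mul_of_fixed (T.pow_apply_choose_x₁ _), map_mul,
    Ring.map_choose T.σ T.x₁]
  ring

theorem mixedOp_chooseBasis_error_mem (i : Fin p × Fin p) :
    (T.σ (truncPow p T.σ T.μ (Ring.choose T.X i.1)) - Ring.choose T.X i.1) *
        Ring.choose (T.σ T.x₁) i.2 ∈ T.top.ideal (T.chooseVal i + p * T.b₁ + 1) := by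
  refine T.top.ideal_mono (le_of_eq ?_) (T.top.mul_mem (T.apply_truncPow_choose_X_sub_mem i.1.2)
    (T.top.choose_mem T.prime T.p_mem T.mul_b₁_pos.le
      (T.map_mem T.σ (T.hasVal_x₁.mem T.top)) i.2.2))
  rw [chooseVal]
  ring

theorem hasVal_mixedOp_chooseBasis {i : Fin p × Fin p} (hi : (i.2 : ℕ) ≠ 0) :
    HasVal vL (mixedOp p T.σ T.μ (T.chooseBasis i)) (T.chooseVal i + p * T.b₁) := by
  have hlead := (T.hasVal_choose_X i.1.2).mul (HasVal.choose_add_sub_choose T.top T.prime T.p_mem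
    T.mul_b₁_pos T.hasVal_x₁ T.hasVal_apply_x₁_sub hi i.2.2) T.top
  rw [add_sub_cancel] at hlead
  rw [mixedOp_chooseBasis]
  exact (hlead.congr (by rw [chooseVal]; ring)).add_of_mem T.top
    (T.mixedOp_chooseBasis_error_mem i) (lt_add_one _)

theorem mixedOp_mem_shift : mixedOp p T.σ T.μ ∈ T.top.shift K (p * T.b₁) := by
  refine T.mem_shift_of_isValBasis T.isValBasis fun i => ?_
  by_cases hi : (i.2 : ℕ) = 0
  · have herr := T.top.ideal_mono (Int.le_of_lt (lt_add_one _)) (T.mixedOp_chooseBasis_error_mem i)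
    rw [mixedOp_chooseBasis, hi, Ring.choose_zero_right, Ring.choose_zero_right, sub_self,
      mul_zero, zero_add]
    rwa [hi, Ring.choose_zero_right] at herr
  · exact (T.hasVal_mixedOp_chooseBasis hi).mem T.top

theorem hasVal_mixedOp {i : Fin p × Fin p} (hi : (i.2 : ℕ) ≠ 0) {z : L} {M : ℤ}
    (hz : HasVal vL z M) (hM : ((p ^ 2 : ℕ) : ℤ) ∣ M - T.chooseVal i) :
    HasVal vL (mixedOp p T.σ T.μ z) (M + p * T.b₁) :=
  T.hasVal_apply_of_dvd T.mixedOp_mem_shift (T.isValBasis.hasVal i)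
    (T.hasVal_mixedOp_chooseBasis hi) hz hM

end MixedOp

section ScaffoldValuation

variable {T} {ρ : L}

theorem hasVal_mixedOp_pow (hρ : HasVal vL ρ T.b₂) {t : ℕ} (ht : t < p) :
    HasVal vL ((mixedOp p T.σ T.μ ^ t) ρ) (T.b₂ + t * (p * T.b₁)) := by
  induction t with
  | zero => simpa using hρ
  | succ t ih =>
    rw [pow_succ', Module.End.mul_apply]
    refine (T.hasVal_mixedOp (i := (⟨p - 1, by omega⟩, ⟨p - 1 - t, by omega⟩))
      (show p - 1 - t ≠ 0 by omega) (ih (by omega)) ?_).congr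
      (by push_cast; ring)
    simpa using T.sq_dvd_sub_chooseVal T.prime.pos (by omega : t < p)

theorem hasVal_diffOp_pow_mul_mixedOp_pow (hρ : HasVal vL ρ T.b₂) {s t : ℕ} (hs : s < p)
    (ht : t < p) : HasVal vL ((diffOp p T.σ ^ s * mixedOp p T.σ T.μ ^ t) ρ)
      ((1 + s) * T.b₂ + t * (p * T.b₁)) := by
  rw [Module.End.mul_apply]
  induction s with
  | zero => simpa using hasVal_mixedOp_pow hρ ht
  | succ s ih =>
    rw [pow_succ', Module.End.mul_apply]
    exact (T.hasVal_diffOp (i := (⟨p - 1 - s, by omega⟩, ⟨p - 1 - t, by omega⟩))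
      (show p - 1 - s ≠ 0 by omega) (ih (by omega))
      (T.sq_dvd_sub_chooseVal (by omega) ht)).congr (by push_cast; ring)

theorem hasVal_scaffoldOp (hρ : HasVal vL ρ T.b₂) {a : ℕ} (ha : a < p ^ 2) :
    HasVal vL (scaffoldOp p T.σ T.μ a ρ) (T.scaffoldVal a) := by
  rw [scaffoldOp, digitOp, if_pos ha]
  exact (hasVal_diffOp_pow_mul_mixedOp_pow hρ (Nat.div_lt_of_lt_mul (by rwa [← sq]))
    (Nat.mod_lt a T.prime.pos)).congr (by rw [scaffoldVal]; ring)

end ScaffoldValuation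

section Products

theorem exists_truncPow_eq : ∃ κ ∈ T.top.shift K (-(p ^ 2 * T.m)),
    Commute (diffOp p T.σ) κ ∧ truncPow p T.σ T.μ = 1 + diffOp p T.σ * κ := by
  refine ⟨∑ i ∈ range (p - 1), Ring.choose T.μ (i + 1) • diffOp p T.σ ^ i,
    sum_mem fun i hi => ?_,
    Commute.sum_right _ _ _ fun i _ => ((Commute.refl _).pow_right i).smul_right _, ?_⟩
  · rw [mem_range] at hi
    refine IsDiscVal.shift_mono ?_ (T.shift_smul (T.choose_μ_mem (k := i + 1) (by omega))
      (IsDiscVal.shift_pow T.diffOp_mem_shift i))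
    have hib₁ : 0 ≤ (i : ℤ) * T.b₁ := mul_nonneg (by positivity) T.b₁_pos.le
    rw [T.b₂_eq]
    push_cast
    linarith
  · obtain ⟨q, rfl⟩ := Nat.exists_eq_add_of_le' T.prime.one_le
    rw [truncPow, sum_range_succ', pow_zero, Ring.choose_zero_right, one_smul, add_comm, mul_sum]
    simp only [mul_smul_comm, pow_succ', Nat.add_sub_cancel]

variable [IsGalois K L]

theorem truncPow_pow_sub_one_mem_shift :
    truncPow p T.σ T.μ ^ p - 1 ∈ T.top.shift K (2 * T.b₂) := by
  obtain ⟨κ, hκ, hcomm, htrunc⟩ := T.exists_truncPow_eq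
  have hDκ : diffOp p T.σ * κ ∈ T.top.shift K T.b₁ :=
    IsDiscVal.shift_mono (by linarith [T.b₂_eq]) (IsDiscVal.shift_mul T.diffOp_mem_shift hκ)
  obtain ⟨r, hr, hpow⟩ := IsDiscVal.exists_one_add_pow_prime_eq T.prime T.b₁_pos.le hDκ
  have hb₂ : (p : ℤ) * T.b₂ = p * (p ^ 2 * T.m + T.b₁) := by rw [T.b₂_eq]
  rw [htrunc, hpow, add_assoc, add_sub_cancel_left, hcomm.mul_pow]
  refine add_mem (IsDiscVal.shift_mono ?_
    (IsDiscVal.shift_mul T.diffOp_pow_prime_mem_shift (IsDiscVal.shift_pow hκ p)))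
    (IsDiscVal.shift_mono ?_
      (IsDiscVal.shift_mul (IsDiscVal.natCast_mem_shift (T.hasVal_p_top.mem T.top)) hr))
  · linarith [T.lt_e, T.b₁_pos]
  · linarith [T.two_mul_b₂_lt, T.b₁_pos]

theorem mixedOp_pow_sub_diffOp_mem_shift :
    mixedOp p T.σ T.μ ^ p - diffOp p T.σ ∈ T.top.shift K (2 * T.b₂) := by
  obtain ⟨r, hr, hpow⟩ :=
    IsDiscVal.exists_one_add_pow_prime_eq T.prime T.mul_b₁_pos.le T.mixedOp_mem_shift
  have htrunc := T.truncPow_pow_sub_one_mem_shift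
  have heq : mixedOp p T.σ T.μ ^ p - diffOp p T.σ = (truncPow p T.σ T.μ ^ p - 1) +
      diffOp p T.σ * (truncPow p T.σ T.μ ^ p - 1) - p * r := by
    rw [one_add_mixedOp_pow, add_mul, one_mul] at hpow
    rw [mul_sub, mul_one]
    linear_combination (norm := abel) -hpow
  rw [heq]
  refine sub_mem (add_mem htrunc (IsDiscVal.shift_mono ?_
    (IsDiscVal.shift_mul T.diffOp_mem_shift htrunc))) (IsDiscVal.shift_mono ?_
      (IsDiscVal.shift_mul (IsDiscVal.natCast_mem_shift (T.hasVal_p_top.mem T.top)) hr))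
  · linarith [T.b₂_pos]
  · linarith [T.two_mul_b₂_lt, T.mul_b₁_pos]

theorem scaffoldOp_mul_sub_mem_shift {j a : ℕ} (hj : j < p ^ 2) (ha : a < p ^ 2) :
    scaffoldOp p T.σ T.μ j * scaffoldOp p T.σ T.μ a - scaffoldOp p T.σ T.μ (j + a) ∈
      T.top.shift K (T.scaffoldVal j + T.scaffoldVal a - T.b₂) :=
  IsDiscVal.shift_mono (by rw [scaffoldVal, scaffoldVal]; linarith)
    (digitOp_mul_sub_mem_shift T.prime.pos (commute_diffOp_mixedOp p T.σ T.μ) T.diffOp_mem_shift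
      T.mixedOp_mem_shift
      (IsDiscVal.shift_mono (by linarith [T.mul_b₂_add_mul_b₁_lt, T.mul_b₁_pos])
        T.diffOp_pow_prime_mem_shift)
      (IsDiscVal.shift_mono (by linarith [T.mul_b₁_le_b₂]) T.mixedOp_pow_sub_diffOp_mem_shift)
      T.mul_b₁_le_b₂ hj ha)

end Products

section Scaffold

variable [IsGalois K L] {ρ : L} {d w : ℕ → ℤ}

theorem isApproxScaffold (hρ : HasVal vL ρ T.b₂)
    (hd : ∀ a < p ^ 2, d a = T.scaffoldVal a / (p : ℤ) ^ 2) :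
    IsApproxScaffold T.toIsTotallyRamified (scaffoldOp p T.σ T.μ) ρ T.scaffoldVal d := by
  have hpos : (0 : ℤ) < (p : ℤ) ^ 2 := pow_pos (by exact_mod_cast T.prime.pos) 2
  have hle : ∀ a < p ^ 2, ((p ^ 2 : ℕ) : ℤ) * d a ≤ T.scaffoldVal a := fun a ha => by
    rw [hd a ha]
    exact_mod_cast Int.mul_ediv_self_le hpos.ne'
  have hlt : ∀ a < p ^ 2, T.scaffoldVal a < ((p ^ 2 : ℕ) : ℤ) * d a + (p ^ 2 : ℕ) :=
    fun a ha => by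
      rw [hd a ha]
      exact_mod_cast Int.lt_mul_ediv_self_add hpos
  refine ⟨?_, fun a ha => digitOp_eq_zero ha, fun a ha => hasVal_scaffoldOp hρ ha,
    fun a ha b hb => T.scaffoldVal_incongruent ha hb, hle, hlt, fun j hj a ha => ?_⟩
  · simpa [scaffoldOp] using digitOp_add_mul (D := diffOp p T.σ) (M := mixedOp p T.σ T.μ)
      T.prime.pos T.prime.pos
  · have hd0 : 1 ≤ d 0 := by
      rw [hd 0 T.pos, Int.le_ediv_iff_mul_le hpos]
      simp only [scaffoldVal, Nat.zero_div, Nat.zero_mod]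
      push_cast
      nlinarith [T.sq_mul_b₁_lt_b₂, T.b₁_pos]
    refine T.top.ideal_mono ?_ (IsDiscVal.shift_apply (T.scaffoldOp_mul_sub_mem_shift hj ha)
      (hρ.mem T.top))
    have hn : ((p ^ 2 : ℕ) : ℤ) * 1 ≤ (p ^ 2 : ℕ) * d 0 :=
      mul_le_mul_of_nonneg_left hd0 (by positivity)
    linarith [hle j hj, hle a ha]

theorem span_scaffoldOp (hρ : HasVal vL ρ T.b₂) :
    Submodule.span K (Set.range fun j : Fin (p ^ 2) => scaffoldOp p T.σ T.μ j) =
      galoisSpan K L := by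
  have := Module.finite_of_finrank_pos (T.finrank_eq ▸ T.pos)
  have hind : LinearIndependent K fun j : Fin (p ^ 2) => scaffoldOp p T.σ T.μ j :=
    (T.linearIndependent (T.isApproxScaffold hρ fun _ _ => rfl).isValBasis).of_comp
      (LinearMap.applyₗ ρ)
  have hset : {f : Module.End K L | ∃ τ : L ≃ₐ[K] L, f = (τ.toLinearMap : Module.End K L)} =
      Set.range fun τ : L ≃ₐ[K] L => (τ.toLinearMap : Module.End K L) :=
    Set.ext fun f => exists_congr fun _ => eq_comm
  refine Submodule.eq_of_le_of_finrank_le ?_ ?_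
  · rw [Submodule.span_le]
    rintro _ ⟨j, rfl⟩
    exact scaffoldOp_mem_span p T.σ T.μ j
  · rw [finrank_span_eq_card hind, Fintype.card_fin, galoisSpan, hset, ← T.finrank_eq,
      ← IsGalois.card_aut_eq_finrank, Nat.card_eq_fintype_card]
    exact finrank_range_le_card _

theorem isOrderGenerator_iff {ρ₀ : L} (hρ₀ : HasVal vL ρ₀ (T.b₂ % (p : ℤ) ^ 2))
    (hd : ∀ a < p ^ 2, d a = T.scaffoldVal a / (p : ℤ) ^ 2) (hw : IsMinGap (p ^ 2) d w) :
    ((∃ ν ∈ T.top.ideal 0, IsOrderGenerator T.top (galoisSpan K L) ν) ↔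
        ∀ j < p ^ 2, w j = d j - d 0) ∧
      ((∀ j < p ^ 2, w j = d j - d 0) → IsOrderGenerator T.top (galoisSpan K L) ρ₀) := by
  obtain ⟨c, hc, hρ⟩ := T.exists_hasVal_smul hρ₀ hd
  have hU := T.isApproxScaffold hρ hd
  rw [← T.span_scaffoldOp hρ]
  refine ⟨hU.exists_isOrderGenerator_iff hw, fun hwd => ?_⟩
  simpa only [inv_smul_smul₀ hc.1] using hU.isOrderGenerator_smul hw hwd (hc.inv T.base)

end Scaffold

end WittTower

/-- Theorem 4.5(b),(c): if `p²e₀ − (p+1)b₂ + (p−1)b₁ > 0` then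
`𝔒₂` is free over the associated order `𝔄 = {α ∈ K₀[G] : α·𝔒₂ ⊆ 𝔒₂}`
(equivalently, `𝔒₂ = 𝔄·ν` for some `ν`, freeness for the associated order
being generation by a single element) if and only if `w_j = d_j − d₀` for all
`0 ≤ j ≤ p²−1`; and in that case `𝔒₂ = 𝔄·ρ₀`.  As before `K₀[G]` is realized
as the `K₀`-span of `G` inside `End_{K₀}(K₂)`. -/
theorem statement19
    (p : ℕ) (hp : p.Prime)
    (K0 K2 : Type*) [Field K0] [Field K2] [CharZero K0] [CharZero K2]
    [Algebra K0 K2] [IsGalois K0 K2] [FiniteDimensional K0 K2]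
    (hdeg : Module.finrank K0 K2 = p ^ 2)
    (hcyc : IsCyclic (K2 ≃ₐ[K0] K2))
    (v0 : K0 → ℤ) (v2 : K2 → ℤ)
    (hv0 : IsDiscVal v0) (hv2 : IsDiscVal v2)
    (e0 : ℤ) (he0 : e0 = v0 (p : K0)) (he0pos : 1 ≤ e0)
    (hram : ∀ x : K0, x ≠ 0 → v2 (algebraMap K0 K2 x) = (p : ℤ) ^ 2 * v0 x)
    (a1 μ a2 : K0) (ha1 : a1 ≠ 0) (hμ0 : μ ≠ 0)
    (hwitt : ∀ y : K0, y ^ p - y ≠ a1)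
    (hnd : ¬ ((p : ℤ) ∣ v0 a1))
    (hneg : v0 a1 < 0)
    (hbd : -((p : ℤ) * e0) < ((p : ℤ) ^ 2 - 1) * v0 a1)
    (m : ℤ) (hm : m = -v0 μ) (hmpos : 0 < m)
    (hmu1 : (p : ℤ) ^ 2 * (p - 1) * m - (2 * p * (p - 1) + 1) * v0 a1 < (p : ℤ) ^ 2 * e0)
    (hmu2 : -(((p : ℤ) ^ 2 - 1) * v0 a1) < (p : ℤ) ^ 2 * m)
    (ha2 : a2 = μ ^ p * a1)
    (x1 x2 : K2)
    (hx1 : x1 ^ p - x1 = algebraMap K0 K2 a1)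
    (hx2 : x2 ^ p - x2 = algebraMap K0 K2 a2 +
      (x1 ^ p + (algebraMap K0 K2 a1) ^ p - (x1 + algebraMap K0 K2 a1) ^ p) / (p : K2))
    (hgen : Algebra.adjoin K0 {x1, x2} = ⊤)
    (b1 b2 : ℤ) (hb1 : b1 = -v0 a1) (hb2 : b2 = (p : ℤ) ^ 2 * m + b1)
    (σ1 : K2 ≃ₐ[K0] K2) (ε δ' : K2)
    (hσ1x1 : σ1 x1 = x1 + 1 + ε)
    (hε : ε ≠ 0) (hεv : v2 ε = (p : ℤ) ^ 2 * e0 - p * (p - 1) * b1)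
    (hσ1x2 : σ1 x2 = x2 + (x1 ^ p + 1 - (x1 + 1) ^ p) / (p : K2) + δ')
    (hδ' : δ' = 0 ∨ 0 < v2 δ')
    (Ψ1 Ψ2 : Module.End K0 K2)
    (hΨ2 : Ψ2 = ((σ1 ^ p).toLinearMap : Module.End K0 K2) - 1)
    (hΨ1 : Ψ1 = (σ1.toLinearMap : Module.End K0 K2) *
      (∑ i ∈ Finset.range p,
        ((∏ k ∈ Finset.range i, (μ - (k : K0))) / (Nat.factorial i : K0)) • Ψ2 ^ i) - 1)
    (π0 : K0) (hπ0 : π0 ≠ 0) (hπ0v : v0 π0 = 1)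
    (ρ0 : K2) (hρ0 : ρ0 ≠ 0) (hρ0v : v2 ρ0 = b2 % (p : ℤ) ^ 2)
    (d : ℕ → ℤ)
    (hd : ∀ a : ℕ, a < p ^ 2 →
      d a = Int.fdiv ((1 + ((a / p : ℕ) : ℤ)) * b2 + ((a % p : ℕ) : ℤ) * (p : ℤ) * b1)
        ((p : ℤ) ^ 2))
    (Ψf : ℕ → Module.End K0 K2)
    (hΨf : ∀ a : ℕ, Ψf a = if a < p ^ 2 then Ψ2 ^ (a / p) * Ψ1 ^ (a % p) else 0)
    (ρ : K2) (hρ : ρ = algebraMap K0 K2 (π0 ^ d 0) * ρ0)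
    (ρf : ℕ → K2) (hρf : ∀ a : ℕ, ρf a = algebraMap K0 K2 (π0 ^ (-d a)) * Ψf a ρ)
    (wj : ℕ → ℤ)
    (hwj : ∀ j : ℕ, j < p ^ 2 →
      IsLeast {x : ℤ | ∃ a : ℕ, a < p ^ 2 - j ∧ x = d (j + a) - d a} (wj j))
    (hbig : 0 < (p : ℤ) ^ 2 * e0 - (p + 1) * b2 + (p - 1) * b1) :
    ((∃ ν : K2, (ν = 0 ∨ 0 ≤ v2 ν) ∧
        ∀ z : K2, (z = 0 ∨ 0 ≤ v2 z) ↔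
          ∃ α : Module.End K0 K2, (α ∈ Submodule.span K0
              {f : Module.End K0 K2 | ∃ σ : K2 ≃ₐ[K0] K2, f = (σ.toLinearMap : Module.End K0 K2)} ∧
            (∀ z : K2, (z = 0 ∨ 0 ≤ v2 z) → (α z = 0 ∨ 0 ≤ v2 (α z)))) ∧ α ν = z) ↔
      (∀ j : ℕ, j < p ^ 2 → wj j = d j - d 0)) ∧
    ((∀ j : ℕ, j < p ^ 2 → wj j = d j - d 0) →
      ∀ z : K2, (z = 0 ∨ 0 ≤ v2 z) ↔
        ∃ α : Module.End K0 K2, (α ∈ Submodule.span K0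
              {f : Module.End K0 K2 | ∃ σ : K2 ≃ₐ[K0] K2, f = (σ.toLinearMap : Module.End K0 K2)} ∧
            (∀ z : K2, (z = 0 ∨ 0 ≤ v2 z) → (α z = 0 ∨ 0 ≤ v2 (α z)))) ∧ α ρ0 = z) := by
  let T : WittTower p v0 v2 :=
    { base := hv0, top := hv2, pos := pow_pos hp.pos 2, finrank_eq := hdeg
      map_eq := fun x hx => by rw [hram x hx, Nat.cast_pow]
      e := e0, m := m, b₁ := b1, b₂ := b2, a₁ := a1, μ := μ, x₁ := x1, x₂ := x2, σ := σ1
      prime := hp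
      hasVal_p := ⟨Nat.cast_ne_zero.2 hp.ne_zero, he0.symm⟩
      hasVal_a₁ := ⟨ha1, by rw [hb1, neg_neg]⟩
      hasVal_μ := ⟨hμ0, by rw [hm, neg_neg]⟩
      not_dvd_b₁ := by rwa [hb1, dvd_neg]
      b₁_pos := by rwa [hb1, neg_pos]
      m_pos := hmpos
      lt_m := by rwa [hb1, mul_neg]
      b₂_eq := hb2
      lt_e := by linarith
      x₁_eq := hx1
      x₂_eq := by rw [hx2, ha2, wittCarry]
      apply_x₁_sub_mem := by rw [hσ1x1, add_sub_cancel_left]; exact Or.inr hεv.ge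
      apply_x₂_sub_mem := by rw [hσ1x2, wittCarry, one_pow, add_sub_cancel_left]; exact hδ' }
  have hpos : (0 : ℤ) < (p : ℤ) ^ 2 := pow_pos (by exact_mod_cast hp.pos) 2
  exact T.isOrderGenerator_iff ⟨hρ0, hρ0v⟩
    (fun a ha => by rw [hd a ha, Int.fdiv_eq_ediv_of_nonneg _ hpos.le]; rfl) hwj
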